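/- For every integer l ≥ 1 there exist a number field k (a finite extension of ℚ), a finite group G, a field extension K/k, an integer n, and a representation ρ : G → GL_n(K) whose essential dimension equals l; that is, ρ descends to some intermediate field k ⊆ K₀ ⊆ K with trdeg_k(K₀) = l, and ρ does not descend to any intermediate field k ⊆ K₀ ⊆ K with trdeg_k(K₀) < l. -/

import Mathlib

open Matrix

/-- A representation `ρ : G → GL_n(K)` descends to an intermediate field `K₀` of `K/k` if
it is `K`-equivalent (conjugate) to the base change of some representation over `K₀`. -/
def Descends {k K : Type*} [Field k] [Field K] [Algebra k K] {G : Type*} [Group G] {n : ℕ}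
    (ρ : G →* GL (Fin n) K) (K₀ : IntermediateField k K) : Prop :=
  ∃ ρ' : G →* GL (Fin n) K₀, ∃ M : GL (Fin n) K,
    ∀ g, ρ g = M * Units.map ((algebraMap K₀ K).mapMatrix).toMonoidHom (ρ' g) * M⁻¹

/-- The transcendence degree of `K₀` over `k` equals `d`: every algebraically independent
finite subset has at most `d` elements, and some algebraically independent finite subset
has exactly `d` elements. -/
def TrdegEq {k K : Type*} [Field k] [Field K] [Algebra k K]
    (K₀ : IntermediateField k K) (d : ℕ) : Prop :=
  (∀ s : Finset K₀,
      AlgebraicIndependent k (fun x : {y : K₀ // y ∈ s} => (x : K₀)) → s.card ≤ d) ∧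
  (∃ s : Finset K₀,
      AlgebraicIndependent k (fun x : {y : K₀ // y ∈ s} => (x : K₀)) ∧ s.card = d)

/-- The transcendence degree of `K₀` over `k` is (strictly) less than `d`. -/
def TrdegLT {k K : Type*} [Field k] [Field K] [Algebra k K]
    (K₀ : IntermediateField k K) (d : ℕ) : Prop :=
  ∀ s : Finset K₀,
    AlgebraicIndependent k (fun x : {y : K₀ // y ∈ s} => (x : K₀)) → s.card < d

/-- A witness that there is a representation of a finite group over an extension of a
number field whose essential dimension is exactly `l`. -/
structure EdRepWitness (l : ℕ) : Type 1 where
  k : Type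
  K : Type
  G : Type
  [field_k : Field k]
  [field_K : Field K]
  [alg : Algebra k K]
  [nf : NumberField k]
  [grp : Group G]
  [fin : Finite G]
  n : ℕ
  ρ : G →* GL (Fin n) K
  descends_to_l : ∃ K₀ : IntermediateField k K, Descends ρ K₀ ∧ TrdegEq K₀ l
  not_below_l : ∀ K₀ : IntermediateField k K, TrdegLT K₀ l → ¬ Descends ρ K₀

namespace EdRep
open Polynomial IntermediateField

lemma aevalAeval_eq_eval₂ {E Ω : Type*} [Field E] [Field Ω] [Algebra E Ω] (f : E[X][X]) (v u : Ω) :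
    f.aevalAeval v u = f.eval₂ ((aeval v : E[X] →ₐ[E] Ω) : E[X] →+* Ω) u := by
  induction f using Polynomial.induction_on' with
  | add p q hp hq => rw [map_add, eval₂_add, hp, hq]
  | monomial n a => simp [eval₂_monomial]

lemma gauss_degree {E Ω : Type*} [Field E] [Field Ω] [Algebra E Ω] (f : E[X][X])
    (hf : Irreducible f) (v u : Ω) (hv : Transcendental E v) (h0 : f.aevalAeval v u = 0) :
    (minpoly E⟮v⟯ u).natDegree = f.natDegree ∧
      ∀ g : E[X][X], g.aevalAeval v u = 0 → f ∣ g := by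
  let alg : Algebra E[X] E⟮v⟯ := (aeval (AdjoinSimple.gen E v)).toAlgebra
  have halg : ∀ g : E[X], algebraMap E[X] E⟮v⟯ g = aeval (AdjoinSimple.gen E v) g := fun _ => rfl
  have : IsFractionRing E[X] E⟮v⟯ := by
    refine IsFractionRing.of_algEquiv (K := RatFunc E)
      (AlgEquiv.ofRingEquiv (f := (RatFunc.algEquivOfTranscendental v hv).toRingEquiv) ?_)
    intro g
    rw [halg]
    exact RatFunc.algEquivOfTranscendental_algebraMap v hv g
  have hmap : ∀ g : E[X][X], aeval u (g.map (algebraMap E[X] E⟮v⟯)) = g.aevalAeval v u := by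
    intro g
    rw [aevalAeval_eq_eval₂, aeval_def, eval₂_map]
    congr 1
    ext x
    · simp [halg]
    · simp [halg]
  have hdeg : f.natDegree ≠ 0 := by
    intro h
    obtain ⟨q, rfl⟩ := natDegree_eq_zero.1 h
    rw [aevalAeval_C] at h0
    have : q = 0 := by
      by_contra hq
      exact hv ⟨q, hq, h0⟩
    subst this
    simp at hf
  have hp : f.IsPrimitive := hf.isPrimitive hdeg
  have hirr := (hp.irreducible_iff_irreducible_map_fraction_map (K := E⟮v⟯)).1 hf
  have hroot : aeval u (f.map (algebraMap E[X] E⟮v⟯)) = 0 := by rw [hmap, h0]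
  have hmin := minpoly.eq_of_irreducible hirr hroot
  have hne : (f.map (algebraMap E[X] E⟮v⟯)).leadingCoeff⁻¹ ≠ 0 :=
    inv_ne_zero (leadingCoeff_ne_zero.2 hirr.ne_zero)
  constructor
  · rw [← hmin, natDegree_mul_C hne,
      natDegree_map_eq_of_injective (IsFractionRing.injective _ _)]
  · intro g hg
    apply hp.dvd_of_fraction_map_dvd_fraction_map (K := E⟮v⟯)
    have := minpoly.dvd E⟮v⟯ u ((hmap g).trans hg)
    rw [← hmin] at this
    exact (dvd_mul_right _ _).trans this

lemma coeff_swap {E : Type*} [Field E] (f : E[X][X]) (i j : ℕ) :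
    ((Bivariate.swap f).coeff i).coeff j = (f.coeff j).coeff i := by
  induction f using Polynomial.induction_on' with
  | add p q hp hq => rw [map_add, coeff_add, coeff_add, hp, hq, coeff_add, coeff_add]
  | monomial n a =>
    induction a using Polynomial.induction_on' with
    | add p q hp hq =>
      rw [map_add, map_add, coeff_add, coeff_add, hp, hq, coeff_add, coeff_add]
    | monomial k r =>
      rw [Bivariate.swap_monomial_monomial]
      simp only [coeff_monomial]
      by_cases h1 : k = i <;> by_cases h2 : n = j <;> simp [h1, h2, coeff_monomial]

lemma aevalAeval_eq_sum {E Ω : Type*} [Field E] [Field Ω] [Algebra E Ω] (f : E[X][X]) (v u : Ω)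
    (m n : ℕ) (hm : f.natDegree ≤ m) (hn : ∀ j, (f.coeff j).natDegree ≤ n) :
    f.aevalAeval v u = ∑ b ∈ Finset.range (m + 1), ∑ a ∈ Finset.range (n + 1),
      algebraMap E Ω ((f.coeff b).coeff a) * v ^ a * u ^ b := by
  rw [aevalAeval_eq_eval₂, eval₂_eq_sum_range' _ (Nat.lt_succ_of_le hm)]
  refine Finset.sum_congr rfl fun b _ => ?_
  rw [← Finset.sum_mul]
  congr 1
  rw [RingHom.coe_coe, aeval_eq_sum_range' (Nat.lt_succ_of_le (hn b))]
  simp [Algebra.smul_def]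

lemma reversal {E Ω : Type*} [Field E] [Field Ω] [Algebra E Ω] (τ : E →+* E) (σ : Ω →+* Ω)
    (hστ : ∀ x, σ (algebraMap E Ω x) = algebraMap E Ω (τ x)) (hττ : ∀ x, τ (τ x) = x)
    (f : E[X][X]) (hf : f ≠ 0) (v u : Ω) (h0 : f.aevalAeval v u = 0)
    (hdvd : ∀ g : E[X][X], g.aevalAeval v u = 0 → f ∣ g)
    (d d' : E) (hd0 : d ≠ 0) (hd0' : d' ≠ 0) (hd : v * σ v = algebraMap E Ω d)
    (hd' : u * σ u = algebraMap E Ω d') (hτd : τ d = d) (hτd' : τ d' = d') :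
    ∃ c : E, c * τ c = d ^ (Bivariate.swap f).natDegree * d' ^ f.natDegree := by
  set n := (Bivariate.swap f).natDegree with hn
  set m := f.natDegree with hm
  have hcoefn : ∀ j, (f.coeff j).natDegree ≤ n := by
    intro j
    rw [natDegree_le_iff_coeff_eq_zero]
    intro i hi
    rw [← coeff_swap, coeff_eq_zero_of_natDegree_lt hi, coeff_zero]
  obtain ⟨j0, hj0⟩ : ∃ j, (f.coeff j).coeff n ≠ 0 := by
    have : (Bivariate.swap f).leadingCoeff ≠ 0 := by
      rw [leadingCoeff_ne_zero]
      simpa using hf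
    by_contra hcon
    push Not at hcon
    apply this
    ext j
    rw [leadingCoeff, coeff_swap, ← hn, hcon, coeff_zero]
  set g : E[X][X] := ∑ b ∈ Finset.range (m + 1), monomial b (∑ a ∈ Finset.range (n + 1),
    monomial a (τ ((f.coeff (m - b)).coeff (n - a)) * d ^ (n - a) * d' ^ (m - b))) with hg
  have hgc : ∀ b, b ≤ m → ∀ a, a ≤ n → (g.coeff b).coeff a =
      τ ((f.coeff (m - b)).coeff (n - a)) * d ^ (n - a) * d' ^ (m - b) := by
    intro b hb a ha
    rw [hg, finsetSum_coeff]
    simp only [coeff_monomial]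
    rw [Finset.sum_ite_eq' , if_pos (by simp; omega), finsetSum_coeff]
    simp only [coeff_monomial]
    rw [Finset.sum_ite_eq' , if_pos (by simp; omega)]
  have hgm : g.natDegree ≤ m := by
    rw [hg]
    refine natDegree_sum_le_of_forall_le _ _ fun b hb => ?_
    refine (natDegree_monomial_le _).trans ?_
    simp at hb; omega
  have hgn : ∀ j, (g.coeff j).natDegree ≤ n := by
    intro b
    rw [hg, finsetSum_coeff]
    simp only [coeff_monomial]
    rw [Finset.sum_ite_eq']
    split_ifs
    · refine natDegree_sum_le_of_forall_le _ _ fun a ha => ?_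
      refine (natDegree_monomial_le _).trans ?_
      simp at ha; omega
    · simp
  have hg0 : g.aevalAeval v u = 0 := by
    have key : g.aevalAeval v u = v ^ n * u ^ m * σ (f.aevalAeval v u) := by
      rw [aevalAeval_eq_sum g v u m n hgm hgn, aevalAeval_eq_sum f v u m n le_rfl hcoefn]
      rw [← Finset.sum_range_reflect, map_sum, Finset.mul_sum]
      refine Finset.sum_congr rfl fun b hb => ?_
      rw [← Finset.sum_range_reflect, map_sum, Finset.mul_sum]
      refine Finset.sum_congr rfl fun a ha => ?_
      have hb' : b ≤ m := by simp at hb; omega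
      have ha' : a ≤ n := by simp at ha; omega
      have e1 : m + 1 - 1 - b = m - b := by omega
      have e2 : n + 1 - 1 - a = n - a := by omega
      rw [e1, e2, hgc _ (by omega) _ (by omega)]
      have e3 : m - (m - b) = b := by omega
      have e4 : n - (n - a) = a := by omega
      rw [e3, e4]
      simp only [map_mul, map_pow, hστ, ← hd, ← hd']
      have e5 : v ^ n = v ^ (n - a) * v ^ a := by rw [← pow_add]; congr 1; omega
      have e6 : u ^ m = u ^ (m - b) * u ^ b := by rw [← pow_add]; congr 1; omega
      rw [e5, e6]
      ring
    rw [key, h0]; simp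
  obtain ⟨q, hq⟩ := hdvd g hg0
  have hj0m : j0 ≤ m := by
    by_contra h
    apply hj0
    have h' : f.coeff j0 = 0 := coeff_eq_zero_of_natDegree_lt (by omega)
    rw [h', coeff_zero]
  have hgne : g ≠ 0 := by
    intro h
    have := hgc (m - j0) (by omega) 0 (by omega)
    rw [h, show m - (m - j0) = j0 by omega, Nat.sub_zero] at this
    simp at this
    rcases this with (h1 | h1) | h1
    · exact hj0 h1
    · exact hd0 h1.1
    · exact hd0' h1.1
  have hqne : q ≠ 0 := by rintro rfl; simp at hq; exact hgne hq
  have hqdeg : q.natDegree = 0 := by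
    have := natDegree_mul hf hqne
    rw [← hq] at this
    omega
  obtain ⟨q0, rfl⟩ := natDegree_eq_zero.1 hqdeg
  have hq0ne : q0 ≠ 0 := by rintro rfl; simp at hqne
  have hq0deg : q0.natDegree = 0 := by
    have h1 : g.coeff j0 = f.coeff j0 * q0 := by rw [hq, coeff_mul_C]
    have h2 : f.coeff j0 ≠ 0 := by intro h; rw [h] at hj0; simp at hj0
    have h3 := natDegree_mul h2 hq0ne
    have h4 := le_natDegree_of_ne_zero hj0
    have h5 := hgn j0
    rw [h1] at h5
    omega
  obtain ⟨c, rfl⟩ := natDegree_eq_zero.1 hq0deg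
  have hfc : ∀ b a, (g.coeff b).coeff a = (f.coeff b).coeff a * c := by
    intro b a
    rw [hq, coeff_mul_C, coeff_mul_C]
  refine ⟨c, ?_⟩
  have r1 := hgc j0 hj0m n le_rfl
  have r2 := hgc (m - j0) (by omega) 0 (by omega)
  rw [hfc] at r1 r2
  rw [show m - (m - j0) = j0 by omega, Nat.sub_zero] at r2
  rw [Nat.sub_self, pow_zero, mul_one] at r1
  have r2' := congrArg τ r2
  simp only [map_mul, map_pow, hττ, hτd, hτd'] at r2'
  have hx : (f.coeff j0).coeff n ≠ 0 := hj0
  have hy : τ ((f.coeff (m - j0)).coeff 0) ≠ 0 := by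
    intro h
    rw [h, zero_mul] at r2'
    exact (mul_ne_zero (mul_ne_zero hx (pow_ne_zero _ hd0)) (pow_ne_zero _ hd0')) r2'.symm
  apply mul_left_cancel₀ (mul_ne_zero hx hy)
  have e6 : d' ^ m = d' ^ (m - j0) * d' ^ j0 := by rw [← pow_add]; congr 1; omega
  rw [e6]
  calc _ = ((f.coeff j0).coeff n * c) * (τ ((f.coeff (m - j0)).coeff 0) * τ c) := by ring
    _ = _ := by rw [r1, r2']; ring

end EdRep

namespace EdRep
open Polynomial IntermediateField

lemma exists_rel {E Ω : Type*} [Field E] [Field Ω] [Algebra E Ω] (v u : Ω)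
    (hv : Transcendental E v) (hu : IsAlgebraic E⟮v⟯ u) :
    ∃ f : E[X][X], Irreducible f ∧ f.aevalAeval v u = 0 := by
  let alg : Algebra E[X] E⟮v⟯ := (aeval (AdjoinSimple.gen E v)).toAlgebra
  have halg : ∀ g : E[X], algebraMap E[X] E⟮v⟯ g = aeval (AdjoinSimple.gen E v) g := fun _ => rfl
  have : IsFractionRing E[X] E⟮v⟯ := by
    refine IsFractionRing.of_algEquiv (K := RatFunc E)
      (AlgEquiv.ofRingEquiv (f := (RatFunc.algEquivOfTranscendental v hv).toRingEquiv) ?_)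
    intro g
    rw [halg]
    exact RatFunc.algEquivOfTranscendental_algebraMap v hv g
  let alg2 : Algebra E[X] Ω := ((aeval v : E[X] →ₐ[E] Ω) : E[X] →+* Ω).toAlgebra
  have : IsScalarTower E[X] E⟮v⟯ Ω := by
    refine IsScalarTower.of_algebraMap_eq fun g => ?_
    rw [halg]
    change aeval v g = _
    have := aeval_algebraMap_apply Ω (AdjoinSimple.gen E v) g
    simpa using this
  have h1 : IsAlgebraic E[X] u := (IsFractionRing.isAlgebraic_iff E[X] E⟮v⟯ Ω).2 hu
  obtain ⟨g, hg, hg0⟩ := h1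
  have hg1 : g.aevalAeval v u = 0 := by
    rw [aevalAeval_eq_eval₂]
    exact hg0
  let I : Ideal E[X][X] := RingHom.ker (aevalAeval v u : E[X][X] →ₐ[E] Ω)
  have hI : I.IsPrime := RingHom.ker_isPrime _
  have hI0 : I ≠ ⊥ := by
    intro h
    have : g ∈ I := hg1
    rw [h] at this
    exact hg (by simpa using this)
  obtain ⟨f, hf, hfp⟩ := hI.exists_mem_prime_of_ne_bot hI0
  exact ⟨f, hfp.irreducible, hf⟩

lemma parity {E Ω : Type*} [Field E] [Field Ω] [Algebra E Ω] (τ : E →+* E) (σ : Ω →+* Ω)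
    (hστ : ∀ x, σ (algebraMap E Ω x) = algebraMap E Ω (τ x)) (hττ : ∀ x, τ (τ x) = x)
    (v u : Ω) (hv : Transcendental E v) (hu : IsAlgebraic E⟮v⟯ u)
    (d d' : E) (hd0 : d ≠ 0) (hd0' : d' ≠ 0) (hd : v * σ v = algebraMap E Ω d)
    (hd' : u * σ u = algebraMap E Ω d') (hτd : τ d = d) (hτd' : τ d' = d') :
    ∃ c : E, ∃ n : ℕ, c * τ c = d ^ n * d' ^ (minpoly E⟮v⟯ u).natDegree ∧
      (n ≠ 0 → (minpoly E⟮u⟯ v).natDegree = n) := by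
  obtain ⟨f, hf, h0⟩ := exists_rel v u hv hu
  obtain ⟨hm, hdvd⟩ := gauss_degree f hf v u hv h0
  obtain ⟨c, hc⟩ := reversal τ σ hστ hττ f hf.ne_zero v u h0 hdvd d d' hd0 hd0' hd hd' hτd hτd'
  refine ⟨c, (Bivariate.swap f).natDegree, by rw [hm]; exact hc, fun hn => ?_⟩
  have hut : Transcendental E u := by
    rintro ⟨q, hq, hq0⟩
    have h1 : f ∣ q.map C := by
      apply hdvd
      rw [← Bivariate.swap_C, Bivariate.aevalAeval_swap, aevalAeval_C, hq0]
    obtain ⟨r, hr⟩ := h1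
    have h2 : Bivariate.swap f * Bivariate.swap r = C q := by
      rw [← map_mul, ← hr, Bivariate.swap_map_C]
    have hCq : (C q : E[X][X]) ≠ 0 := C_ne_zero.2 hq
    have hsf : Bivariate.swap f ≠ 0 := fun h => by rw [h, zero_mul] at h2; exact hCq h2.symm
    have hsr : Bivariate.swap r ≠ 0 := fun h => by rw [h, mul_zero] at h2; exact hCq h2.symm
    have h3 := natDegree_mul hsf hsr
    rw [h2, natDegree_C] at h3
    omega
  refine (gauss_degree (Bivariate.swap f) ?_ u v hut ?_).1
  · exact (MulEquiv.irreducible_iff (Bivariate.swap (R := E))).2 hf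
  · rw [Bivariate.aevalAeval_swap, h0]

/-- Tower law for fields. -/
lemma tower {A B C : Type*} [Field A] [Field B] [Field C] [Algebra A B] [Algebra B C] [Algebra A C]
    [IsScalarTower A B C] : Module.finrank A B * Module.finrank B C = Module.finrank A C :=
  Module.finrank_mul_finrank A B C

/-- The exchange step. -/
lemma exchange {E Ω : Type*} [Field E] [Field Ω] [Algebra E Ω] (τ : E →+* E) (σ : Ω →+* Ω)
    (hστ : ∀ x, σ (algebraMap E Ω x) = algebraMap E Ω (τ x)) (hττ : ∀ x, τ (τ x) = x)
    (v u : Ω) (hv : Transcendental E v)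
    (d : E) (hd0 : d ≠ 0) (hd : v * σ v = algebraMap E Ω d)
    (hd' : u * σ u = algebraMap E Ω d) (hτd : τ d = d) (hnorm : ∀ c : E, c * τ c ≠ d)
    (hodd : Odd (Module.finrank E⟮v⟯ Ω)) : Odd (Module.finrank E⟮u⟯ Ω) := by
  have hfin : FiniteDimensional E⟮v⟯ Ω := FiniteDimensional.of_finrank_pos hodd.pos
  have hu : IsAlgebraic E⟮v⟯ u := Algebra.IsAlgebraic.isAlgebraic u
  obtain ⟨c, n, hc, hn⟩ := parity τ σ hστ hττ v u hv hu d d hd0 hd0 hd hd' hτd hτd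
  set m := (minpoly E⟮v⟯ u).natDegree with hm
  have hui : IsIntegral E⟮v⟯ u := hu.isIntegral
  have t1 : Module.finrank E⟮v⟯ E⟮v⟯⟮u⟯ = m := adjoin.finrank hui
  have t2 : m * Module.finrank E⟮v⟯⟮u⟯ Ω = Module.finrank E⟮v⟯ Ω := by
    rw [← t1]; exact tower
  rw [← t2, Nat.odd_mul] at hodd
  have hnodd : Odd n := by
    by_contra hne
    rw [Nat.not_odd_iff_even] at hne
    have : Odd (n + m) := hne.add_odd hodd.1
    obtain ⟨r, hr⟩ := this
    rw [← pow_add, hr] at hc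
    apply hnorm (c * (d ^ r)⁻¹)
    rw [map_mul, map_inv₀, map_pow, hτd]
    have : d ^ r ≠ 0 := pow_ne_zero _ hd0
    calc _ = (c * τ c) * ((d ^ r)⁻¹ * (d ^ r)⁻¹) := by ring
      _ = d := by rw [hc]; field_simp; ring
  have hn' := hn hnodd.pos.ne'
  have hvi : IsIntegral E⟮u⟯ v := by
    by_contra h
    rw [minpoly.eq_zero h] at hn'
    simp at hn'
    rw [← hn'] at hnodd
    simp at hnodd
  have t3 : Module.finrank E⟮u⟯ E⟮u⟯⟮v⟯ = n := by rw [← hn']; exact adjoin.finrank hvi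
  have t4 : n * Module.finrank E⟮u⟯⟮v⟯ Ω = Module.finrank E⟮u⟯ Ω := by
    rw [← t3]; exact tower
  rw [← t4, Nat.odd_mul]
  refine ⟨hnodd, ?_⟩
  have t5 : Module.finrank E⟮u⟯⟮v⟯ Ω = Module.finrank E⟮v⟯⟮u⟯ Ω := by
    change Module.finrank (E⟮u⟯⟮v⟯.restrictScalars E) Ω = Module.finrank (E⟮v⟯⟮u⟯.restrictScalars E) Ω
    rw [adjoin_simple_comm]
  rw [t5]; exact hodd.2


end EdRep

namespace EdRep
open Polynomial IntermediateField

lemma adjoin_stable {L Ω : Type*} [Field L] [Field Ω] [Algebra L Ω] (τ : L →+* L) (σ : Ω →+* Ω)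
    (hστ : ∀ x, σ (algebraMap L Ω x) = algebraMap L Ω (τ x)) (S : Set Ω) (E : IntermediateField L Ω)
    (hE : E = adjoin L S)
    (hS : ∀ s ∈ S, σ s ∈ E) (x : Ω) (hx : x ∈ E) : σ x ∈ E := by
  subst hE
  induction hx using adjoin_induction with
  | mem x hx => exact hS x hx
  | algebraMap x => rw [hστ]; exact IntermediateField.algebraMap_mem _ _
  | add x y _ _ hx hy => rw [map_add]; exact add_mem hx hy
  | mul x y _ _ hx hy => rw [map_mul]; exact mul_mem hx hy
  | inv x _ hx => rw [map_inv₀]; exact inv_mem hx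

/-- the restriction of `σ` to a stable subfield -/
def restr {L Ω : Type*} [Field L] [Field Ω] [Algebra L Ω] (σ : Ω →+* Ω) (E : IntermediateField L Ω)
    (h : ∀ x ∈ E, σ x ∈ E) : E →+* E :=
  (σ.comp (algebraMap E Ω)).codRestrict E (fun x => h _ x.2)

lemma norm_stable {L Ω ι : Type*} [Field L] [Field Ω] [Algebra L Ω] (τ : L →+* L) (σ : Ω →+* Ω)
    (hστ : ∀ x, σ (algebraMap L Ω x) = algebraMap L Ω (τ x)) (z : ι → Ω) (d : ι → L)
    (hd0 : ∀ i, d i ≠ 0) (hz : ∀ i, z i * σ (z i) = algebraMap L Ω (d i))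
    (T : Set ι) (E : IntermediateField L Ω)
    (hE : E = adjoin L (z '' T)) : ∀ x ∈ E, σ x ∈ E := by
  refine adjoin_stable τ σ hστ _ _ hE ?_
  rintro _ ⟨i, hi, rfl⟩
  have h0 : z i ≠ 0 := by
    intro h
    have := hz i
    rw [h, zero_mul] at this
    exact hd0 i ((map_eq_zero (algebraMap L Ω)).1 this.symm)
  have : σ (z i) = algebraMap L Ω (d i) / z i := by
    rw [← hz i]; field_simp
  rw [this]
  subst hE
  exact div_mem (IntermediateField.algebraMap_mem _ _) (subset_adjoin _ _ ⟨i, hi, rfl⟩)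

lemma adjoin_insert_eq {L Ω ι : Type*} [Field L] [Field Ω] [Algebra L Ω] (z : ι → Ω) (T : Set ι)
    (w : Ω) (E : IntermediateField L Ω) (hE : E = adjoin L (z '' T)) :
    E⟮w⟯.restrictScalars L = adjoin L (insert w (z '' T)) := by
  subst hE
  rw [adjoin_adjoin_left]
  congr 1
  simp

lemma amitsur {L Ω ι : Type*} [DecidableEq ι] [Field L] [Field Ω] [Algebra L Ω] (τ : L →+* L) (σ : Ω →+* Ω)
    (hστ : ∀ x, σ (algebraMap L Ω x) = algebraMap L Ω (τ x))
    (hσσ : ∀ x, σ (σ x) = x) (z : ι → Ω) (d : ι → L)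
    (hd0 : ∀ i, d i ≠ 0) (hτd : ∀ i, τ (d i) = d i)
    (hz : ∀ i, z i * σ (z i) = algebraMap L Ω (d i)) (hzi : AlgebraicIndependent L z)
    (T : Finset ι) : ∀ e : L, e ≠ 0 → τ e = e → ∀ w ∈ adjoin L (z '' (T : Set ι)),
      w * σ w = algebraMap L Ω e → ∃ c : L, ∃ n : ι → ℕ, c * τ c = e * ∏ i ∈ T, d i ^ n i := by
  induction T using Finset.induction_on with
  | empty =>
    intro e he hτe w hw hwe
    simp only [Finset.coe_empty, Set.image_empty, adjoin_empty] at hw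
    obtain ⟨c, rfl⟩ := mem_bot.1 hw
    rw [hστ, ← map_mul] at hwe
    exact ⟨c, 0, by simpa using (algebraMap L Ω).injective hwe⟩
  | insert i T hi ih =>
    intro e he hτe w hw hwe
    obtain ⟨E, hE⟩ : ∃ E, E = adjoin L (z '' (T : Set ι)) := ⟨_, rfl⟩
    have hstab := norm_stable τ σ hστ z d hd0 hz T E hE
    have hcoe : ∀ x : E, ((restr σ E hstab x : E) : Ω) = σ x := fun x => rfl
    have hres : ∀ x : L, restr σ E hstab (algebraMap L E x) = algebraMap L E (τ x) := by
      intro x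
      apply Subtype.ext
      rw [hcoe]
      exact hστ x
    have htr : Transcendental E (z i) := by
      subst hE
      rw [transcendental_adjoin_iff]
      exact hzi.transcendental_adjoin (by simpa using hi)
    have hwE : w ∈ E⟮z i⟯ := by
      have := adjoin_insert_eq z T (z i) E hE
      rw [Finset.coe_insert, Set.image_insert_eq, ← this] at hw
      exact hw
    have hwalg : IsAlgebraic E⟮z i⟯ w := isAlgebraic_algebraMap (⟨w, hwE⟩ : E⟮z i⟯)
    have hdeg : (minpoly E⟮z i⟯ w).natDegree = 1 := by
      rw [minpoly.natDegree_eq_one_iff]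
      exact ⟨⟨w, hwE⟩, rfl⟩
    obtain ⟨c, n, hc, -⟩ := parity (restr σ E hstab) σ (fun x => (hcoe x).symm)
      (fun x => Subtype.ext (by rw [hcoe, hcoe, hσσ])) (z i) w htr hwalg
      (algebraMap L E (d i)) (algebraMap L E e) (by simpa using hd0 i) (by simpa using he)
      (hz i) hwe (by rw [hres, hτd]) (by rw [hres, hτe])
    rw [hdeg, pow_one, ← map_pow, ← map_mul] at hc
    obtain ⟨c', n', hc'⟩ := ih (d i ^ n * e) (mul_ne_zero (pow_ne_zero _ (hd0 i)) he)
      (by rw [map_mul, map_pow, hτd, hτe]) c (hE ▸ c.2) (by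
        have := congrArg (algebraMap E Ω) hc
        rw [map_mul] at this
        exact this)
    refine ⟨c', Function.update n' i n, ?_⟩
    rw [hc', Finset.prod_insert hi, Function.update_self]
    have : ∏ x ∈ T, d x ^ Function.update n' i n x = ∏ x ∈ T, d x ^ n' x := by
      refine Finset.prod_congr rfl fun x hx => ?_
      rw [Function.update_of_ne]
      rintro rfl; exact hi hx
    rw [this]; ring

theorem mainM {L Ω ι : Type} [Fintype ι] [DecidableEq ι] [Field L] [Field Ω] [Algebra L Ω]
    (τ : L →+* L) (σ : Ω →+* Ω)
    (hστ : ∀ x, σ (algebraMap L Ω x) = algebraMap L Ω (τ x))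
    (hσσ : ∀ x, σ (σ x) = x) (t s : ι → Ω) (d : ι → L)
    (hd0 : ∀ i, d i ≠ 0) (hτd : ∀ i, τ (d i) = d i)
    (hind : ∀ (c : L) (e : ι → ℕ), c * τ c = ∏ i, d i ^ e i → ∀ i, Even (e i))
    (ht : ∀ i, t i * σ (t i) = algebraMap L Ω (d i))
    (hs : ∀ i, s i * σ (s i) = algebraMap L Ω (d i))
    (hti : AlgebraicIndependent L t) (htop : adjoin L (Set.range t) = ⊤) :
    Odd (Module.finrank (adjoin L (Set.range s)) Ω) := by
  have hbas : IsTranscendenceBasis L t := by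
    have : Algebra.IsAlgebraic (Algebra.adjoin L (Set.range t)) Ω := by
      rw [← isAlgebraic_adjoin_iff_top, htop]
      exact ⟨fun x => isAlgebraic_algebraMap (⟨x, mem_top⟩ : (⊤ : IntermediateField L Ω))⟩
    exact hti.isTranscendenceBasis_iff_isAlgebraic.2 this
  have hcard := hbas.cardinalMk_eq_trdeg
  have key : ∀ S : Finset ι, Odd (Module.finrank
      (adjoin L (Set.range (fun j => if j ∈ S then s j else t j))) Ω) := by
    intro S
    induction S using Finset.induction_on with
    | empty =>
      have : (fun j => if j ∈ (∅ : Finset ι) then s j else t j) = t := by ext; simp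
      rw [this, htop, IntermediateField.finrank_top]
      exact odd_one
    | insert j S hj ih =>
      set z : ι → Ω := fun j => if j ∈ S then s j else t j with hz
      have hzj : z j = t j := by simp [hz, hj]
      have hzd : ∀ i, z i * σ (z i) = algebraMap L Ω (d i) := by
        intro i
        simp only [hz]
        split_ifs
        · exact hs i
        · exact ht i
      have hfin : FiniteDimensional (adjoin L (Set.range z)) Ω := FiniteDimensional.of_finrank_pos ih.pos
      have hzi : AlgebraicIndependent L z := by
        have : Algebra.IsAlgebraic (Algebra.adjoin L (Set.range z)) Ω := by
          rw [← isAlgebraic_adjoin_iff_top]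
          infer_instance
        exact (Algebra.IsAlgebraic.isTranscendenceBasis_of_le_trdeg_of_finite L z hcard.le).1
      obtain ⟨E, hE⟩ : ∃ E, E = adjoin L (z '' ({j}ᶜ : Set ι)) := ⟨_, rfl⟩
      have hstab := norm_stable τ σ hστ z d hd0 hzd _ E hE
      have hcoe : ∀ x : E, ((restr σ E hstab x : E) : Ω) = σ x := fun x => rfl
      have hres : ∀ x : L, restr σ E hstab (algebraMap L E x) = algebraMap L E (τ x) := by
        intro x
        apply Subtype.ext
        rw [hcoe]
        exact hστ x
      have htr : Transcendental E (t j) := by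
        subst hE
        rw [transcendental_adjoin_iff, ← hzj]
        exact hzi.transcendental_adjoin (by simp)
      have e1 : E⟮t j⟯.restrictScalars L = adjoin L (Set.range z) := by
        rw [adjoin_insert_eq z _ (t j) E hE, ← hzj, ← Set.image_insert_eq, ← Set.image_univ]
        congr 2
        ext x; simp; tauto
      have e2 : E⟮s j⟯.restrictScalars L =
          adjoin L (Set.range (fun i => if i ∈ insert j S then s i else t i)) := by
        rw [adjoin_insert_eq z _ (s j) E hE]
        congr 1
        ext x
        simp only [Set.mem_insert_iff, Set.mem_image, Set.mem_compl_iff, Set.mem_singleton_iff,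
          Set.mem_range, Finset.mem_insert, hz]
        constructor
        · rintro (rfl | ⟨i, hi, rfl⟩)
          · exact ⟨j, by simp⟩
          · exact ⟨i, by simp [hi]⟩
        · rintro ⟨i, rfl⟩
          by_cases hi : i = j
          · left; simp [hi]
          · right; exact ⟨i, hi, by simp [hi]⟩
      have h1 : Odd (Module.finrank E⟮t j⟯ Ω) := by
        rw [← e1] at ih
        exact ih
      have h2 : Odd (Module.finrank E⟮s j⟯ Ω) := by
        refine exchange (restr σ E hstab) σ (fun x => (hcoe x).symm)
          (fun x => Subtype.ext (by rw [hcoe, hcoe, hσσ])) (t j) (s j) htr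
          (algebraMap L E (d j)) (by simpa using hd0 j) (ht j) (hs j) (by rw [hres, hτd]) ?_ h1
        intro c hc
        obtain ⟨c', n, hc'⟩ := amitsur τ σ hστ hσσ z d hd0 hτd hzd hzi (Finset.univ.erase j) (d j)
          (hd0 j) (hτd j) c (by
            have h : (((Finset.univ.erase j : Finset ι)) : Set ι) = {j}ᶜ := by ext; simp
            rw [h, ← hE]
            exact c.2) (by
            have := congrArg (algebraMap E Ω) hc
            rw [map_mul] at this
            exact this)
        have := hind c' (Function.update n j 1) (by
          rw [hc', ← Finset.mul_prod_erase Finset.univ _ (Finset.mem_univ j), Function.update_self,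
            pow_one]
          congr 1
          refine Finset.prod_congr rfl fun x hx => ?_
          rw [Function.update_of_ne (Finset.ne_of_mem_erase hx)]) j
        rw [Function.update_self] at this
        exact absurd this (by decide)
      rw [← e2]
      exact h2
  have := key Finset.univ
  have h : (fun j => if j ∈ (Finset.univ : Finset ι) then s j else t j) = s := by ext; simp
  rw [h] at this
  exact this

end EdRep

namespace EdRep
open Polynomial IntermediateField

/-- `F(i)` -/
abbrev GQ (F : Type*) [Field F] := QuadraticAlgebra F (-1) 0

lemma gq_I {F : Type*} [Field F] : (⟨0, 1⟩ : GQ F) * ⟨0, 1⟩ = -1 := by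
  ext <;> simp [QuadraticAlgebra.re_one, QuadraticAlgebra.im_one]

lemma gq_star_I {F : Type*} [Field F] : starRingEnd (GQ F) ⟨0, 1⟩ = -⟨0, 1⟩ := by
  rw [starRingEnd_apply]
  ext <;> simp

lemma gq_star_algebraMap {F : Type*} [Field F] (x : F) :
    starRingEnd (GQ F) (algebraMap F (GQ F) x) = algebraMap F (GQ F) x := by
  rw [starRingEnd_apply]
  ext <;> simp

lemma det_sq_add_sq {F n : Type*} [Field F] [Fintype n] [DecidableEq n] (A B : Matrix n n F)
    (h : A * B = B * A) : ∃ u v : F, (A * A + B * B).det = u ^ 2 + v ^ 2 := by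
  let Q := GQ F
  let f : F →+* Q := algebraMap F Q
  let I : Q := ⟨0, 1⟩
  have hI : I * I = -1 := gq_I
  have hsI : starRingEnd Q I = -I := gq_star_I
  have hsf : ∀ x, starRingEnd Q (f x) = f x := gq_star_algebraMap
  let A' : Matrix n n Q := f.mapMatrix A
  let B' : Matrix n n Q := f.mapMatrix B
  have hAB : A' * B' = B' * A' := by
    simp only [A', B', ← map_mul, h]
  let M : Matrix n n Q := A' + I • B'
  have hM : (starRingEnd Q).mapMatrix M = A' - I • B' := by
    ext1 i j
    change starRingEnd Q (f (A i j) + I * f (B i j)) = f (A i j) - I * f (B i j)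
    rw [map_add, map_mul, hsf, hsf, hsI]; ring
  have h1 : M * (starRingEnd Q).mapMatrix M = f.mapMatrix (A * A + B * B) := by
    rw [hM, map_add, map_mul, map_mul]
    change (A' + I • B') * (A' - I • B') = A' * A' + B' * B'
    rw [add_mul, mul_sub, mul_sub]
    simp only [Matrix.mul_smul, Matrix.smul_mul, smul_smul, hI, hAB, neg_one_smul]
    abel
  have h2 := congrArg Matrix.det h1
  rw [Matrix.det_mul, ← RingHom.map_det, ← RingHom.map_det, starRingEnd_apply,
    ← QuadraticAlgebra.algebraMap_norm_eq_mul_star] at h2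
  have h3 := f.injective h2
  refine ⟨M.det.re, M.det.im, ?_⟩
  rw [← h3, QuadraticAlgebra.norm_def]
  ring

lemma norm_sq_add_sq {F k : Type*} [Field F] [Field k] [Algebra F k] [FiniteDimensional F k]
    (x y : k) : ∃ u v : F, Algebra.norm F (x ^ 2 + y ^ 2) = u ^ 2 + v ^ 2 := by
  classical
  let b := Module.finBasis F k
  obtain ⟨u, v, h⟩ := det_sq_add_sq (Algebra.leftMulMatrix b x) (Algebra.leftMulMatrix b y)
    (by rw [← map_mul, ← map_mul, mul_comm])
  refine ⟨u, v, ?_⟩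
  rw [← h, Algebra.norm_eq_matrix_det b, ← map_mul, ← map_mul, ← map_add, sq, sq]

lemma rat_sq_add_sq (N q : ℕ) (hN : N ≠ 0) (hq : q.Prime) (hq3 : q % 4 = 3) (u v : ℚ)
    (h : (N : ℚ) = u ^ 2 + v ^ 2) : Even (padicValNat q N) := by
  have : Fact q.Prime := ⟨hq⟩
  let D := u.den * v.den
  have hD : D ≠ 0 := mul_ne_zero u.den_nz v.den_nz
  have hu : (u.num : ℚ) = u * u.den := (Rat.mul_den_eq_num u).symm
  have hv : (v.num : ℚ) = v * v.den := (Rat.mul_den_eq_num v).symm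
  have e1 : ((N * D ^ 2 : ℕ) : ℤ) = (u.num * v.den) ^ 2 + (v.num * u.den) ^ 2 := by
    have : ((N * D ^ 2 : ℕ) : ℚ) = ((u.num * v.den : ℤ) : ℚ) ^ 2 + ((v.num * u.den : ℤ) : ℚ) ^ 2 := by
      push_cast [D]
      rw [h, hu, hv]; ring
    exact_mod_cast this
  have e2 : N * D ^ 2 = (u.num * v.den).natAbs ^ 2 + (v.num * u.den).natAbs ^ 2 := by
    zify
    rw [sq_abs, sq_abs]
    exact_mod_cast e1
  have e3 := Nat.eq_sq_add_sq_iff.1 ⟨_, _, e2⟩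
  have e4 : padicValNat q (N * D ^ 2) = padicValNat q N + 2 * padicValNat q D := by
    rw [padicValNat.mul hN (pow_ne_zero _ hD), padicValNat.pow]
  by_cases hd : q ∣ N * D ^ 2
  · have := e3 q (Nat.mem_primeFactors.2 ⟨hq, hd, mul_ne_zero hN (pow_ne_zero _ hD)⟩) hq3
    rw [e4] at this
    simpa [Nat.even_add] using this
  · have : ¬ q ∣ N := fun h => hd (h.mul_right _)
    rw [padicValNat.eq_zero_of_not_dvd this]
    exact Even.zero

lemma independence {ι k : Type*} [Fintype ι] [DecidableEq ι] [Field k] [NumberField k]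
    (hk : Odd (Module.finrank ℚ k)) (p : ι → ℕ) (hp : ∀ j, (p j).Prime) (hp3 : ∀ j, p j % 4 = 3)
    (hpi : Function.Injective p) (d r : ι → k) (hd0 : ∀ j, d j ≠ 0)
    (hd : ∀ j, d j = -(p j : k) * r j ^ 2) (x y : k) (e : ι → ℕ)
    (h : x ^ 2 + y ^ 2 = ∏ j, d j ^ e j) (j : ι) : Even (e j) := by
  obtain ⟨u, v, huv⟩ := norm_sq_add_sq (F := ℚ) x y
  set m := Module.finrank ℚ k with hm
  have hr0 : ∀ j, r j ≠ 0 := by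
    intro j hj
    apply hd0 j
    rw [hd, hj]; simp
  have hn : ∀ j, Algebra.norm ℚ (d j) = (-(p j : ℚ)) ^ m * Algebra.norm ℚ (r j) ^ 2 := by
    intro j
    rw [hd, map_mul, map_pow]
    congr 1
    have : (-(p j : k)) = algebraMap ℚ k (-(p j : ℚ)) := by simp
    rw [this, Algebra.norm_algebraMap]
  set R : ℚ := ∏ j, Algebra.norm ℚ (r j) ^ e j with hR
  have hR0 : R ≠ 0 := Finset.prod_ne_zero_iff.2 fun j _ =>
    pow_ne_zero _ (Algebra.norm_ne_zero_iff.2 (hr0 j))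
  have h1 : (∏ j, (-(p j : ℚ)) ^ (m * e j)) * R ^ 2 = u ^ 2 + v ^ 2 := by
    rw [← huv, h, map_prod, hR, ← Finset.prod_pow, ← Finset.prod_mul_distrib]
    refine Finset.prod_congr rfl fun j _ => ?_
    rw [map_pow, hn, mul_pow, pow_mul]; ring
  have h2 : (∏ j, (-(p j : ℚ)) ^ (m * e j)) = (u / R) ^ 2 + (v / R) ^ 2 := by
    rw [div_pow, div_pow, ← add_div, ← h1]; field_simp
  have h3 : ((∏ j, p j ^ (m * e j) : ℕ) : ℚ) = (u / R) ^ 2 + (v / R) ^ 2 := by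
    have : (0 : ℚ) ≤ ∏ j, (-(p j : ℚ)) ^ (m * e j) := by rw [h2]; positivity
    rw [← h2, ← abs_of_nonneg this, Finset.abs_prod]
    push_cast
    refine Finset.prod_congr rfl fun j _ => ?_
    rw [abs_pow, abs_neg, Nat.abs_cast]
  have h4 := rat_sq_add_sq _ (p j) (Finset.prod_ne_zero_iff.2 fun i _ =>
    pow_ne_zero _ (hp i).ne_zero) (hp j) (hp3 j) _ _ h3
  have : Fact (p j).Prime := ⟨hp j⟩
  have h5 : padicValNat (p j) (∏ i, p i ^ (m * e i)) = m * e j := by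
    rw [← Finset.mul_prod_erase Finset.univ _ (Finset.mem_univ j),
      padicValNat.mul (pow_ne_zero _ (hp j).ne_zero) (Finset.prod_ne_zero_iff.2 fun i _ =>
        pow_ne_zero _ (hp i).ne_zero), padicValNat.prime_pow, padicValNat.eq_zero_of_not_dvd,
        add_zero]
    intro hdiv
    rw [Prime.dvd_finsetProd_iff (hp j).prime] at hdiv
    obtain ⟨i, hi, hdi⟩ := hdiv
    have := (Nat.prime_dvd_prime_iff_eq (hp j) (hp i)).1 ((hp j).dvd_of_dvd_pow hdi)
    exact Finset.ne_of_mem_erase hi (hpi this.symm)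
  rw [h5, Nat.even_mul] at h4
  rcases h4 with h4 | h4
  · exact absurd h4 (Nat.not_even_iff_odd.2 hk)
  · exact h4

lemma gauss_elt {E : Type*} [Field E] [Algebra ℚ E] (p : ℕ) (hp : p.Prime) (hp3 : p % 4 = 3)
    (ζ : E) (hζ : IsPrimitiveRoot ζ p) : ∃ g : E, g ^ 2 = -(p : E) ∧ ∀ h : E ≃ₐ[ℚ] E,
      (h ζ = ζ → h g = g) ∧ (h ζ = ζ⁻¹ → h g = -g) := by
  have : Fact p.Prime := ⟨hp⟩
  have : CharZero E := algebraRat.charZero E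
  have hchar : ringChar (ZMod p) ≠ 2 := by
    rw [ZMod.ringChar_zmod_n]; rintro rfl; omega
  let χ : MulChar (ZMod p) E := (quadraticChar (ZMod p)).ringHomComp (Int.castRingHom E)
  let ψ : AddChar (ZMod p) E := AddChar.zmodChar p hζ.pow_eq_one
  have hχq : χ.IsQuadratic := (quadraticChar_isQuadratic (ZMod p)).comp _
  have hχ1 : χ ≠ 1 := by
    rw [Ne, MulChar.ringHomComp_eq_one_iff (RingHom.injective_int _)]
    exact quadraticChar_ne_one hchar
  have hneg : χ (-1) = -1 := by
    have h1 : quadraticChar (ZMod p) (-1) = -1 := by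
      rw [quadraticChar_neg_one_iff_not_isSquare, ZMod.exists_sq_eq_neg_one_iff]
      simpa using hp3
    change ((quadraticChar (ZMod p) (-1) : ℤ) : E) = -1
    rw [h1]; simp
  have hψ : ψ.IsPrimitive := AddChar.zmodChar_primitive_of_primitive_root p hζ
  refine ⟨gaussSum χ ψ, ?_, fun h => ⟨fun hh => ?_, fun hh => ?_⟩⟩
  · rw [gaussSum_sq hχ1 hχq hψ, hneg, ZMod.card]; ring
  · rw [gaussSum, map_sum]
    refine Finset.sum_congr rfl fun a _ => ?_
    rw [map_mul]
    congr 1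
    · change h ((quadraticChar (ZMod p) a : ℤ) : E) = ((quadraticChar (ZMod p) a : ℤ) : E)
      simp
    · change h (ζ ^ a.val) = ζ ^ a.val
      rw [map_pow, hh]
  · have h1 := gaussSum_mulShift χ ψ (-1)
    have h2 : h (gaussSum χ ψ) = gaussSum χ (ψ.mulShift ((-1 : (ZMod p)ˣ) : ZMod p)) := by
      rw [gaussSum, map_sum, gaussSum]
      refine Finset.sum_congr rfl fun a _ => ?_
      rw [map_mul]
      congr 1
      · change h ((quadraticChar (ZMod p) a : ℤ) : E) = ((quadraticChar (ZMod p) a : ℤ) : E)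
        simp
      · rw [AddChar.mulShift_apply, Units.val_neg, Units.val_one, neg_one_mul, AddChar.map_neg_eq_inv]
        change h (ζ ^ a.val) = (ζ ^ a.val)⁻¹
        rw [map_pow, hh, inv_pow]
    rw [h2, ← h1, Units.val_neg, Units.val_one, hneg]; ring

lemma two_group_act {E : Type*} [Field E] [Algebra ℚ E] (p : ℕ) (hp : p.Prime) (hp3 : p % 4 = 3)
    (ζ : E) (hζ : IsPrimitiveRoot ζ p) (h : E ≃ₐ[ℚ] E) (a : ℕ) (ha : h ^ (2 ^ a) = 1) :
    h ζ = ζ ∨ h ζ = ζ⁻¹ := by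
  have : Fact p.Prime := ⟨hp⟩
  have hspec := hζ.autToPow_spec ℚ h
  set u := hζ.autToPow ℚ h with hu
  have h1 : u ^ (2 ^ a) = 1 := by rw [hu, ← map_pow, ha, map_one]
  have h2 : u ^ (p - 1) = 1 := ZMod.units_pow_card_sub_one_eq_one p u
  have h3 : orderOf u ∣ 2 := by
    have d1 := orderOf_dvd_of_pow_eq_one h1
    have d2 := orderOf_dvd_of_pow_eq_one h2
    obtain ⟨b, hb, hb'⟩ := (Nat.dvd_prime_pow Nat.prime_two).1 d1
    rw [hb'] at d2 ⊢
    have : b ≤ 1 := by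
      by_contra hcon
      have : 2 ^ 2 ∣ p - 1 := (pow_dvd_pow 2 (by omega)).trans d2
      omega
    exact (pow_dvd_pow 2 this).trans (by simp)
  have h4 : u ^ 2 = 1 := orderOf_dvd_iff_pow_eq_one.1 h3
  have h5 : (u : ZMod p) ^ 2 = 1 := by rw [← Units.val_pow_eq_pow_val, h4, Units.val_one]
  let ψ : AddChar (ZMod p) E := AddChar.zmodChar p hζ.pow_eq_one
  have hψ : ψ (u : ZMod p) = h ζ := hspec
  have hψ1 : ψ 1 = ζ := by
    have := AddChar.zmodChar_apply' hζ.pow_eq_one 1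
    rw [Nat.cast_one, pow_one] at this
    exact this
  rcases eq_or_eq_neg_of_sq_eq_sq _ _ (h5.trans (one_pow 2).symm) with h6 | h6
  · left; rw [← hψ, h6, hψ1]
  · right; rw [← hψ, h6, AddChar.map_neg_eq_inv, hψ1]

lemma dvd_of_root {k E : Type*} [Field k] [Field E] [Algebra k E] (p : ℕ) (ζ : E) (c : k)
    (hc : algebraMap k E c = ζ + ζ⁻¹) (hζ : ζ ^ p = 1) (hz0 : ζ ≠ 0) (hz : ζ ≠ ζ⁻¹) :
    (X ^ 2 - C c * X + 1 : k[X]) ∣ X ^ p - 1 := by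
  rw [← Polynomial.map_dvd_map' (algebraMap k E)]
  simp only [Polynomial.map_add, Polynomial.map_sub, Polynomial.map_mul, Polynomial.map_pow,
    Polynomial.map_X, Polynomial.map_C, Polynomial.map_one, hc]
  have e : (X ^ 2 - C (ζ + ζ⁻¹) * X + 1 : E[X]) = (X - C ζ) * (X - C ζ⁻¹) := by
    have : (C ζ * C ζ⁻¹ : E[X]) = 1 := by rw [← C_mul, mul_inv_cancel₀ hz0, C_1]
    rw [C_add]
    linear_combination (-1 : E[X]) * this
  rw [e]
  apply IsCoprime.mul_dvd
  · exact isCoprime_X_sub_C_of_isUnit_sub (sub_ne_zero.2 hz).isUnit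
  · rw [dvd_iff_isRoot]; simp [hζ]
  · rw [dvd_iff_isRoot]; simp [hζ]

theorem numberTheory (l : ℕ) : ∃ (k : Type) (_ : Field k) (_ : NumberField k) (p : Fin l → ℕ)
    (c : Fin l → k), (∀ j, Odd (p j)) ∧ (∀ j, (X ^ 2 - C (c j) * X + 1 : k[X]) ∣ X ^ (p j) - 1) ∧
    (∀ j, c j ^ 2 - 4 ≠ 0) ∧
    (∀ (x y : k) (e : Fin l → ℕ), x ^ 2 + y ^ 2 = ∏ j, (c j ^ 2 - 4) ^ e j → ∀ j, Even (e j)) := by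
  have hinf : {p : ℕ | p.Prime ∧ p % 4 = 3}.Infinite := by
    rw [Set.infinite_iff_exists_gt]
    intro n
    obtain ⟨p, hp, hpp, hpm⟩ := Nat.forall_exists_prime_gt_and_modEq n (q := 4) (a := 3) (by norm_num)
      (by norm_num)
    exact ⟨p, ⟨hpp, hpm⟩, hp⟩
  let f := hinf.natEmbedding
  let p : Fin l → ℕ := fun j => f j
  have hp : ∀ j, (p j).Prime := fun j => (f j).2.1
  have hp3 : ∀ j, p j % 4 = 3 := fun j => (f j).2.2
  have hpi : Function.Injective p := fun i j h => Fin.ext (f.injective (Subtype.ext h))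
  let n := ∏ j, p j
  have hn : NeZero n := ⟨Finset.prod_ne_zero_iff.2 fun j _ => (hp j).ne_zero⟩
  let E := CyclotomicField n ℚ
  have hcyc : IsCyclotomicExtension {n} ℚ E := CyclotomicField.isCyclotomicExtension n ℚ
  have hgal : IsGalois ℚ E := IsCyclotomicExtension.isGalois {n} ℚ E
  have hfd : FiniteDimensional ℚ E := IsCyclotomicExtension.finiteDimensional {n} ℚ E
  obtain ⟨z, hz⟩ : ∃ z : E, IsPrimitiveRoot z n :=
    ⟨_, IsCyclotomicExtension.zeta_spec n ℚ E⟩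
  have hex : ∀ j, ∃ ζ : E, IsPrimitiveRoot ζ (p j) := by
    intro j
    have : n = (∏ i ∈ Finset.univ.erase j, p i) * p j :=
      (Finset.prod_erase_mul _ _ (Finset.mem_univ j)).symm
    exact ⟨_, hz.pow (Nat.pos_of_ne_zero hn.ne) this⟩
  choose ζ hζ using hex
  choose g hg hgh using fun j => gauss_elt (p j) (hp j) (hp3 j) (ζ j) (hζ j)
  have : Fact (Nat.Prime 2) := ⟨Nat.prime_two⟩
  obtain ⟨H⟩ : Nonempty (Sylow 2 (E ≃ₐ[ℚ] E)) := inferInstance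
  have hact : ∀ h ∈ H, ∀ j, h (ζ j) = ζ j ∨ h (ζ j) = (ζ j)⁻¹ := by
    intro h hh j
    obtain ⟨a, ha⟩ := H.2 ⟨h, hh⟩
    exact two_group_act (p j) (hp j) (hp3 j) (ζ j) (hζ j) h a (by simpa using congrArg Subtype.val ha)
  let k : IntermediateField ℚ E := fixedField (H : Subgroup (E ≃ₐ[ℚ] E))
  have hmem : ∀ x : E, (∀ h ∈ H, h x = x) → x ∈ k := by
    intro x hx
    rw [mem_fixedField_iff]
    exact hx
  have hz0 : ∀ j, ζ j ≠ 0 := fun j => (hζ j).ne_zero (hp j).ne_zero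
  have hz1 : ∀ j, ζ j ≠ (ζ j)⁻¹ := by
    intro j h
    have : ζ j ^ 2 = 1 := by
      rw [sq]; nth_rewrite 2 [h]; exact mul_inv_cancel₀ (hz0 j)
    have := Nat.le_of_dvd (by norm_num) ((hζ j).dvd_of_pow_eq_one 2 this)
    have := hp3 j
    omega
  have hcmem : ∀ j, ζ j + (ζ j)⁻¹ ∈ k := by
    intro j
    refine hmem _ fun h hh => ?_
    rcases hact h hh j with h1 | h1
    · rw [map_add, map_inv₀, h1]
    · rw [map_add, map_inv₀, h1, inv_inv, add_comm]
  have hg0 : ∀ j, g j ≠ 0 := by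
    intro j h
    have := hg j
    rw [h] at this
    have h2 : ((p j : ℕ) : E) ≠ 0 := Nat.cast_ne_zero.2 (hp j).ne_zero
    apply h2
    simpa using this.symm
  have hrmem : ∀ j, (ζ j - (ζ j)⁻¹) / g j ∈ k := by
    intro j
    refine hmem _ fun h hh => ?_
    rcases hact h hh j with h1 | h1
    · rw [map_div₀, map_sub, map_inv₀, h1, (hgh j h).1 h1]
    · rw [map_div₀, map_sub, map_inv₀, h1, inv_inv, (hgh j h).2 h1, div_neg, ← neg_div, neg_sub]
  let c : Fin l → k := fun j => ⟨_, hcmem j⟩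
  let r : Fin l → k := fun j => ⟨_, hrmem j⟩
  have hdE : ∀ j, (algebraMap k E (c j ^ 2 - 4)) = (ζ j - (ζ j)⁻¹) ^ 2 := by
    intro j
    have : algebraMap k E (c j) = ζ j + (ζ j)⁻¹ := rfl
    rw [map_sub, map_pow, this]
    have h4 : algebraMap k E 4 = 4 := map_ofNat _ _
    rw [h4]
    have := mul_inv_cancel₀ (hz0 j)
    linear_combination 4 * this
  have hd0 : ∀ j, c j ^ 2 - 4 ≠ 0 := by
    intro j h
    have := hdE j
    rw [h, map_zero] at this
    exact pow_ne_zero 2 (sub_ne_zero.2 (hz1 j)) this.symm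
  have hodd : Odd (Module.finrank ℚ k) := by
    have h1 : Module.finrank k E = Nat.card H := finrank_fixedField_eq_card _
    have h2 : Module.finrank ℚ k * Module.finrank k E = Module.finrank ℚ E :=
      Module.finrank_mul_finrank _ _ _
    have h3 : Nat.card (E ≃ₐ[ℚ] E) = Module.finrank ℚ E := IsGalois.card_aut_eq_finrank ℚ E
    have h4 := (H : Subgroup (E ≃ₐ[ℚ] E)).index_mul_card
    have h5 := H.not_dvd_index
    have h6 : Module.finrank ℚ k = (H : Subgroup (E ≃ₐ[ℚ] E)).index := by
      apply Nat.eq_of_mul_eq_mul_right (Nat.card_pos (α := H))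
      rw [← h1, h2, h1]
      exact h3.symm.trans h4.symm
    rw [h6, ← Nat.not_even_iff_odd, even_iff_two_dvd]
    exact h5
  have hnf : NumberField k := NumberField.of_intermediateField k
  refine ⟨k, inferInstance, hnf, p, c, ?_, ?_, hd0, ?_⟩
  · intro j
    rw [Nat.odd_iff]
    have := hp3 j
    omega
  · intro j
    exact dvd_of_root (p j) (ζ j) (c j) rfl (hζ j).pow_eq_one (hz0 j) (hz1 j)
  · intro x y e h j
    refine independence hodd p hp hp3 hpi (fun j => c j ^ 2 - 4) r hd0 ?_ x y e h j
    intro j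
    apply (algebraMap k E).injective
    rw [hdE, map_mul, map_pow, map_neg, map_natCast, ← hg j]
    have : algebraMap k E (r j) = (ζ j - (ζ j)⁻¹) / g j := rfl
    rw [this, ← mul_pow, mul_div_cancel₀ _ (hg0 j)]

end EdRep

namespace EdRep
open Polynomial IntermediateField

lemma basis_of_adjoin_top {L Ω ι : Type} [Finite ι] [Field L] [Field Ω] [Algebra L Ω] (t : ι → Ω)
    (hti : AlgebraicIndependent L t) (htop : adjoin L (Set.range t) = ⊤) :
    IsTranscendenceBasis L t := by
  have : Algebra.IsAlgebraic (Algebra.adjoin L (Set.range t)) Ω := by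
    rw [← isAlgebraic_adjoin_iff_top, htop]
    exact ⟨fun x => isAlgebraic_algebraMap (⟨x, mem_top⟩ : (⊤ : IntermediateField L Ω))⟩
  exact hti.isTranscendenceBasis_iff_isAlgebraic.2 this

lemma algInd_of_adjoin_top {L Ω ι : Type} [Finite ι] [Field L] [Field Ω] [Algebra L Ω] (t w : ι → Ω)
    (hti : AlgebraicIndependent L t) (htop : adjoin L (Set.range t) = ⊤)
    (hw : adjoin L (Set.range w) = ⊤) : AlgebraicIndependent L w := by
  have : Algebra.IsAlgebraic (Algebra.adjoin L (Set.range w)) Ω := by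
    rw [← isAlgebraic_adjoin_iff_top, hw]
    exact ⟨fun x => isAlgebraic_algebraMap (⟨x, mem_top⟩ : (⊤ : IntermediateField L Ω))⟩
  exact (Algebra.IsAlgebraic.isTranscendenceBasis_of_le_trdeg_of_finite L w
    (basis_of_adjoin_top t hti htop).cardinalMk_eq_trdeg.le).1

theorem exists_omega {L ι : Type} [Finite ι] [Field L] (τ : L →+* L) (hττ : ∀ x, τ (τ x) = x)
    (d : ι → L) (hd0 : ∀ i, d i ≠ 0) (hτd : ∀ i, τ (d i) = d i) :
    ∃ (Ω : Type) (_ : Field Ω) (_ : Algebra L Ω) (σ : Ω →+* Ω) (t : ι → Ω),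
      (∀ x, σ (algebraMap L Ω x) = algebraMap L Ω (τ x)) ∧ (∀ x, σ (σ x) = x) ∧
      (∀ i, t i * σ (t i) = algebraMap L Ω (d i)) ∧
      AlgebraicIndependent L t ∧ adjoin L (Set.range t) = ⊤ := by
  let P := MvPolynomial ι L
  let Ω := FractionRing P
  let t : ι → Ω := fun i => algebraMap P Ω (MvPolynomial.X i)
  have hinj : Function.Injective (algebraMap P Ω) := IsFractionRing.injective P Ω
  have hti : AlgebraicIndependent L t :=
    (MvPolynomial.algebraicIndependent_X ι L).map' (f := IsScalarTower.toAlgHom L P Ω) hinj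
  have hPmem : ∀ x : P, algebraMap P Ω x ∈ adjoin L (Set.range t) := by
    intro x
    induction x using MvPolynomial.induction_on with
    | C a =>
      have : algebraMap P Ω (MvPolynomial.C a) = algebraMap L Ω a :=
        (IsScalarTower.algebraMap_apply L P Ω a).symm
      rw [this]; exact IntermediateField.algebraMap_mem _ _
    | add p q hp hq => rw [map_add]; exact add_mem hp hq
    | mul_X p i hp => rw [map_mul]; exact mul_mem hp (subset_adjoin _ _ ⟨i, rfl⟩)
  have htop : adjoin L (Set.range t) = ⊤ := by
    rw [eq_top_iff]
    intro x _
    obtain ⟨a, b, hb, rfl⟩ := IsFractionRing.div_surjective (A := P) x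
    exact div_mem (hPmem a) (hPmem b)
  have ht0 : ∀ i, t i ≠ 0 := fun i => hti.ne_zero i
  have hda : ∀ i, algebraMap L Ω (d i) ≠ 0 := fun i => by simpa using hd0 i
  let w : ι → Ω := fun i => algebraMap L Ω (d i) / t i
  have hwtop : adjoin L (Set.range w) = ⊤ := by
    rw [eq_top_iff, ← htop, adjoin_le_iff]
    rintro _ ⟨i, rfl⟩
    have : t i = algebraMap L Ω (d i) / w i := by
      exact (div_div_cancel₀ (hda i)).symm
    rw [this]
    exact div_mem (IntermediateField.algebraMap_mem _ _) (subset_adjoin _ _ ⟨i, rfl⟩)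
  have hwi := algInd_of_adjoin_top t w hti htop hwtop
  let φ : P →+* Ω := ((MvPolynomial.aeval w : P →ₐ[L] Ω) : P →+* Ω).comp (MvPolynomial.map τ)
  have hφ : Function.Injective φ := by
    refine Function.Injective.comp (g := (MvPolynomial.aeval w : P →ₐ[L] Ω)) hwi ?_
    exact MvPolynomial.map_injective τ τ.injective
  let σ : Ω →+* Ω := IsFractionRing.lift hφ
  have hσP : ∀ x, σ (algebraMap P Ω x) = φ x := fun x => IsFractionRing.lift_algebraMap hφ x
  have hσL : ∀ x, σ (algebraMap L Ω x) = algebraMap L Ω (τ x) := by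
    intro x
    rw [IsScalarTower.algebraMap_apply L P Ω, hσP]
    have h1 : (MvPolynomial.map τ) (MvPolynomial.C x : MvPolynomial ι L) = MvPolynomial.C (τ x) :=
      MvPolynomial.map_C _ _
    have h2 : (MvPolynomial.aeval w) (MvPolynomial.C (τ x) : MvPolynomial ι L) =
      algebraMap L Ω (τ x) := MvPolynomial.aeval_C _ _
    exact (congrArg (MvPolynomial.aeval w) h1).trans h2
  have hσt : ∀ i, σ (t i) = w i := by
    intro i
    simp only [t]
    rw [hσP]
    have h1 : (MvPolynomial.map τ) (MvPolynomial.X i : MvPolynomial ι L) = MvPolynomial.X i :=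
      MvPolynomial.map_X _ _
    have h2 : (MvPolynomial.aeval w) (MvPolynomial.X i : MvPolynomial ι L) = w i :=
      MvPolynomial.aeval_X _ _
    exact (congrArg (MvPolynomial.aeval w) h1).trans h2
  refine ⟨Ω, inferInstance, inferInstance, σ, t, hσL, ?_, ?_, hti, htop⟩
  · intro x
    have hx : x ∈ adjoin L (Set.range t) := by rw [htop]; exact mem_top
    induction hx using adjoin_induction with
    | mem x hx =>
      obtain ⟨i, rfl⟩ := hx
      rw [hσt]
      simp only [w]
      rw [map_div₀, hσL, hσt, hτd]
      exact div_div_cancel₀ (hda i)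
    | algebraMap x => rw [hσL, hσL, hττ]
    | add x y _ _ hx hy => rw [map_add, map_add, hx, hy]
    | mul x y _ _ hx hy => rw [map_mul, map_mul, hx, hy]
    | inv x _ hx => rw [map_inv₀, map_inv₀, hx]
  · intro i
    rw [hσt]
    exact mul_div_cancel₀ _ (ht0 i)

lemma isAlg_of_adjoin {K₀ L Ω : Type*} [Field K₀] [Field L] [Field Ω] [Algebra K₀ Ω] [Algebra L Ω]
    (S : Set Ω) (h : Algebra.IsAlgebraic (adjoin L S) Ω)
    (hL : ∀ x : L, IsAlgebraic K₀ (algebraMap L Ω x)) (hS : ∀ s ∈ S, IsAlgebraic K₀ s) :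
    Algebra.IsAlgebraic K₀ Ω := by
  let C := algebraicClosure K₀ Ω
  have hmem : ∀ x ∈ adjoin L S, x ∈ C := by
    intro x hx
    induction hx using adjoin_induction with
    | mem x hx => exact mem_algebraicClosure_iff.2 (hS x hx)
    | algebraMap x => exact mem_algebraicClosure_iff.2 (hL x)
    | add x y _ _ hx hy => exact add_mem hx hy
    | mul x y _ _ hx hy => exact mul_mem hx hy
    | inv x _ hx => exact inv_mem hx
  let f : adjoin L S →+* C := (algebraMap (adjoin L S) Ω).codRestrict C (fun x => hmem _ x.2)
  let _ : Algebra (adjoin L S) C := f.toAlgebra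
  have : IsScalarTower (adjoin L S) C Ω := IsScalarTower.of_algebraMap_eq fun _ => rfl
  have : Algebra.IsAlgebraic C Ω := Algebra.IsAlgebraic.tower_top (K := adjoin L S) C
  exact Algebra.IsAlgebraic.trans K₀ C Ω

theorem exists_K {k : Type} [Field k] [CharZero k] {l : ℕ} (hns : ∀ x : k, x ^ 2 ≠ -1)
    (d : Fin l → k) (hd0 : ∀ j, d j ≠ 0)
    (hind : ∀ (x y : k) (e : Fin l → ℕ), x ^ 2 + y ^ 2 = ∏ j, d j ^ e j → ∀ j, Even (e j)) :
    ∃ (K : Type) (_ : Field K) (_ : Algebra k K),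
      (∀ j, ∃ a b : K, a ^ 2 + b ^ 2 = algebraMap k K (d j)) ∧
      ∀ K₀ : IntermediateField k K, (∀ j, ∃ a b : K₀, a ^ 2 + b ^ 2 = algebraMap k K₀ (d j)) →
        Algebra.trdeg k K₀ = l := by
  have : Fact (∀ r : k, r ^ 2 ≠ -1 + 0 * r) := ⟨fun r => by simpa using hns r⟩
  let L := GQ k
  let τ : L →+* L := starRingEnd L
  have hττ : ∀ x, τ (τ x) = x := fun x => star_star x
  have hτk : ∀ x : k, τ (algebraMap k L x) = algebraMap k L x := gq_star_algebraMap
  obtain ⟨I, hI, hτI⟩ : ∃ I : L, I * I = -1 ∧ τ I = -I := ⟨⟨0, 1⟩, gq_I, gq_star_I⟩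
  have hdL0 : ∀ j, algebraMap k L (d j) ≠ 0 := fun j => by simpa using hd0 j
  obtain ⟨Ω, _, _, σ, t, hσL, hσσ, ht, hti, htop⟩ := exists_omega τ hττ
    (fun j => algebraMap k L (d j)) hdL0 (fun j => hτk _)
  let _ : Algebra k Ω := ((algebraMap L Ω).comp (algebraMap k L)).toAlgebra
  have : IsScalarTower k L Ω := IsScalarTower.of_algebraMap_eq fun _ => rfl
  have hkL : ∀ x, algebraMap k Ω x = algebraMap L Ω (algebraMap k L x) := fun _ => rfl
  have hσk : ∀ x, σ (algebraMap k Ω x) = algebraMap k Ω x := by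
    intro x; rw [hkL, hσL, hτk]
  have htrΩ : Algebra.trdeg k Ω = l := by
    have h1 : Algebra.trdeg k L + Algebra.trdeg L Ω = Algebra.trdeg k Ω := trdeg_add_eq k L
    have h2 : Algebra.trdeg k L = 0 := trdeg_eq_zero
    rw [← h1, h2, zero_add, ← (basis_of_adjoin_top t hti htop).cardinalMk_eq_trdeg]
    simp
  let K : IntermediateField k Ω :=
    { carrier := {x | σ x = x}
      mul_mem' := fun {x y} hx hy => by
        simp only [Set.mem_ofPred_eq] at *
        rw [map_mul, hx, hy]
      add_mem' := fun {x y} hx hy => by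
        simp only [Set.mem_ofPred_eq] at *
        rw [map_add, hx, hy]
      algebraMap_mem' := hσk
      inv_mem' := fun x hx => by
        simp only [Set.mem_ofPred_eq] at *
        rw [map_inv₀, hx] }
  have hK : ∀ x : K, σ (x : Ω) = x := fun x => x.2
  set J : Ω := algebraMap L Ω I with hJ
  have hJJ : J * J = -1 := by rw [hJ, ← map_mul, hI]; simp
  have hσJ : σ J = -J := by rw [hJ, hσL, hτI, map_neg]
  refine ⟨K, inferInstance, inferInstance, ?_, ?_⟩
  · intro j
    have h2 : (2 : Ω) ≠ 0 := by
      have : CharZero Ω := charZero_of_injective_algebraMap (algebraMap k Ω).injective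
      exact two_ne_zero
    have hσ2 : σ 2 = 2 := map_ofNat _ _
    have hJ0 : J ≠ 0 := by rintro h; rw [h] at hJJ; simp at hJJ
    refine ⟨⟨(t j + σ (t j)) / 2, ?_⟩, ⟨(t j - σ (t j)) / (2 * J), ?_⟩, ?_⟩
    · change σ _ = _
      rw [map_div₀, map_add, hσσ, hσ2, add_comm]
    · change σ _ = _
      rw [map_div₀, map_sub, hσσ, map_mul, hσ2, hσJ, mul_neg, div_neg, ← neg_div, neg_sub]
    · apply Subtype.ext
      change ((t j + σ (t j)) / 2) ^ 2 + ((t j - σ (t j)) / (2 * J)) ^ 2 = algebraMap k Ω (d j)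
      rw [hkL, ← ht j, div_pow, div_pow, mul_pow, sq J, hJJ]
      field_simp
      ring
  · intro K₀ hab
    choose a b hab using hab
    let s : Fin l → Ω := fun j => algebraMap K₀ Ω (a j) + J * algebraMap K₀ Ω (b j)
    have hσ0 : ∀ x : K₀, σ (algebraMap K₀ Ω x) = algebraMap K₀ Ω x := fun x => hK (x : K)
    have hs : ∀ j, s j * σ (s j) = algebraMap L Ω (algebraMap k L (d j)) := by
      intro j
      simp only [s]
      rw [map_add, map_mul, hσ0, hσ0, hσJ, ← hkL]
      have : algebraMap K₀ Ω (a j) ^ 2 + algebraMap K₀ Ω (b j) ^ 2 = algebraMap k Ω (d j) := by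
        rw [← map_pow, ← map_pow, ← map_add, hab]
        rfl
      rw [← this]
      linear_combination (-(algebraMap K₀ Ω (b j) ^ 2)) * hJJ
    have hodd := mainM τ σ hσL hσσ t s (fun j => algebraMap k L (d j)) hdL0 (fun j => hτk _)
      (by
        intro c e hc
        have h1 : c * τ c = algebraMap k L (QuadraticAlgebra.norm c) :=
          (QuadraticAlgebra.algebraMap_norm_eq_mul_star c).symm
        simp only [← map_pow] at hc
        rw [h1, ← map_prod] at hc
        have h2 := (algebraMap k L).injective hc
        refine hind c.re c.im e ?_
        rw [← h2, QuadraticAlgebra.norm_def]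
        ring) ht hs hti htop
    have hfin : FiniteDimensional (adjoin L (Set.range s)) Ω := FiniteDimensional.of_finrank_pos hodd.pos
    have : IsScalarTower k K₀ Ω := IsScalarTower.of_algebraMap_eq fun _ => rfl
    have hLalg : ∀ x : L, IsAlgebraic K₀ (algebraMap L Ω x) := by
      intro x
      have h1 : IsAlgebraic k x := Algebra.IsAlgebraic.isAlgebraic x
      have h2 : IsAlgebraic k (algebraMap L Ω x) := h1.algebraMap
      exact h2.tower_top K₀
    have halg : Algebra.IsAlgebraic K₀ Ω := by
      refine isAlg_of_adjoin (L := L) (Set.range s) (Algebra.IsAlgebraic.of_finite _ _) hLalg ?_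
      rintro _ ⟨j, rfl⟩
      exact (isAlgebraic_algebraMap (a j)).add ((hLalg I).mul (isAlgebraic_algebraMap (b j)))
    have h1 : Algebra.trdeg k K₀ + Algebra.trdeg K₀ Ω = Algebra.trdeg k Ω :=
      trdeg_add_eq k K₀
    rw [trdeg_eq_zero (R := K₀) (A := Ω), add_zero, htrΩ] at h1
    exact h1

end EdRep

namespace EdRep
open Polynomial IntermediateField

lemma extract_end {F V : Type*} [Field F] [CharZero F] [AddCommGroup V] [Module F V]
    [FiniteDimensional F V] (Y W : Module.End F V) (d : F)
    (hY : Y * Y * (Y * Y) = 1) (hYW : Y * W = -(W * Y)) (hYYW : Y * Y * W = -W)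
    (hWW : (2 : F) • (W * W) = d • (1 - Y * Y))
    (htr : LinearMap.trace F V (1 - Y * Y) = 4) : ∃ a b : F, a ^ 2 + b ^ 2 = d := by
  let S : Submodule F V := LinearMap.ker (1 + Y * Y)
  have hS : ∀ v, v ∈ S ↔ Y (Y v) = -v := by
    intro v
    simp only [S, LinearMap.mem_ker, LinearMap.add_apply, Module.End.one_apply, Module.End.mul_apply]
    rw [add_comm]; exact add_eq_zero_iff_eq_neg
  have hY' : ∀ v, Y (Y (Y (Y v))) = v := fun v => LinearMap.congr_fun hY v
  have hYW' : ∀ v, Y (W v) = - W (Y v) := fun v => LinearMap.congr_fun hYW v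
  have hYYW' : ∀ v, Y (Y (W v)) = - W v := fun v => LinearMap.congr_fun hYYW v
  have hWW' : ∀ v, (2 : F) • W (W v) = d • (v - Y (Y v)) := fun v => LinearMap.congr_fun hWW v
  have h2 : (2 : F) ≠ 0 := two_ne_zero
  have hproj : LinearMap.IsProj S ((2 : F)⁻¹ • (1 - Y * Y)) := by
    constructor
    · intro v
      rw [hS]
      simp [hY', smul_sub]
    · intro v hv
      rw [hS] at hv
      simp only [LinearMap.smul_apply, LinearMap.sub_apply, Module.End.one_apply,
        Module.End.mul_apply, hv, sub_neg_eq_add]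
      rw [← two_smul F v, smul_smul, inv_mul_cancel₀ h2, one_smul]
  have hfr : Module.finrank F S = 2 := by
    have h := hproj.trace
    rw [map_smul, htr, smul_eq_mul] at h
    have : ((Module.finrank F S : ℕ) : F) = ((2 : ℕ) : F) := by
      rw [← h]; norm_num
    exact_mod_cast this
  have hnt : Nontrivial S := Module.nontrivial_of_finrank_pos (R := F) (by omega)
  obtain ⟨⟨v, hvS⟩, hv0⟩ := exists_ne (0 : S)
  have hv : v ≠ 0 := fun h => hv0 (Subtype.ext h)
  have hYYv := (hS v).1 hvS
  by_cases hex : ∃ c : F, Y v = c • v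
  · obtain ⟨c, hc⟩ := hex
    have hcc : c ^ 2 = -1 := by
      have h1 : (c ^ 2 + 1) • v = 0 := by
        rw [hc, map_smul, hc, smul_smul] at hYYv
        rw [add_smul, sq, hYYv, one_smul, neg_add_cancel]
      have := (smul_eq_zero.1 h1).resolve_right hv
      linear_combination this
    refine ⟨(d + 1) / 2, c * (d - 1) / 2, ?_⟩
    rw [div_pow, div_pow, mul_pow, hcc]
    ring
  · push Not at hex
    have hYvS : Y v ∈ S := by rw [hS, hYYv, map_neg]
    have hWvS : W v ∈ S := by rw [hS, hYYW']
    have hli : LinearIndependent F ![(⟨v, hvS⟩ : S), ⟨Y v, hYvS⟩] := by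
      rw [LinearIndependent.pair_iff' hv0]
      intro a h
      exact hex a (Subtype.ext_iff.1 h).symm
    have hsp := hli.span_eq_top_of_card_eq_finrank (by simp [hfr])
    have hmem : (⟨W v, hWvS⟩ : S) ∈ Submodule.span F (Set.range ![(⟨v, hvS⟩ : S), ⟨Y v, hYvS⟩]) := by
      rw [hsp]; exact Submodule.mem_top
    rw [Matrix.range_cons, Matrix.range_cons, Matrix.range_empty, Set.union_empty,
      Set.singleton_union, Submodule.mem_span_pair] at hmem
    obtain ⟨a, b, hab⟩ := hmem
    have hab : a • v + b • Y v = W v := Subtype.ext_iff.1 hab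
    have hWY : W (Y v) = - Y (W v) := by rw [hYW', neg_neg]
    have h1 : W (W v) = (a ^ 2 + b ^ 2) • v := by
      conv_lhs => rw [← hab]
      rw [map_add, map_smul, map_smul, hWY, ← hab, map_add, map_smul, map_smul, hYYv]
      module
    have h2 : W (W v) = d • v := by
      have := hWW' v
      rw [hYYv, sub_neg_eq_add, ← two_smul F v, smul_comm d] at this
      exact smul_right_injective V h2 this
    exact ⟨a, b, smul_left_injective F hv (h1.symm.trans h2)⟩

lemma extract_mat {F : Type*} {n : ℕ} [Field F] [CharZero F] (Y W : Matrix (Fin n) (Fin n) F) (d : F)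
    (hY : Y * Y * (Y * Y) = 1) (hYW : Y * W = -(W * Y)) (hYYW : Y * Y * W = -W)
    (hWW : (2 : F) • (W * W) = d • (1 - Y * Y))
    (htr : Matrix.trace (1 - Y * Y) = 4) : ∃ a b : F, a ^ 2 + b ^ 2 = d := by
  let f := Matrix.toLinAlgEquiv' (R := F) (n := Fin n)
  refine extract_end (f Y) (f W) d ?_ ?_ ?_ ?_ ?_
  · rw [← map_mul, ← map_mul, hY, map_one]
  · rw [← map_mul, hYW, map_neg, map_mul]
  · rw [← map_mul, ← map_mul, hYYW, map_neg]
  · rw [← map_mul, ← map_mul, ← map_smul, hWW, map_smul, map_sub, map_one]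
  · rw [← map_mul, ← map_one f, ← map_sub]
    exact (Matrix.trace_toLin'_eq _).trans htr

lemma quat_lift {U : Type*} [Group U] {p : ℕ} [NeZero p] (A Y : U) (hA : A ^ (2 * p) = 1)
    (hYY : Y * Y = A ^ p) (hYA : Y * A = A⁻¹ * Y) :
    ∃ f : QuaternionGroup p →* U, f (QuaternionGroup.a 1) = A ∧ f (QuaternionGroup.xa 0) = Y := by
  let g : ZMod (2 * p) → U := fun i => A ^ i.val
  have hgn : ∀ m : ℕ, g (m : ZMod (2 * p)) = A ^ m := by
    intro m
    simp only [g]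
    rw [ZMod.val_natCast, ← pow_eq_pow_mod m hA]
  have hadd : ∀ i j, g (i + j) = g i * g j := by
    intro i j
    simp only [g]
    rw [ZMod.val_add, ← pow_eq_pow_mod _ hA, pow_add]
  have hcomm : ∀ i j, g i * g j = g j * g i := fun i j => by rw [← hadd, ← hadd, add_comm]
  have hsub : ∀ i j, g (j - i) = (g i)⁻¹ * g j := by
    intro i j
    rw [eq_inv_mul_iff_mul_eq, ← hadd, add_sub_cancel]
  have hYg : ∀ i, Y * g i = (g i)⁻¹ * Y := by
    intro i
    have h : SemiconjBy Y A A⁻¹ := hYA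
    have := h.pow_right i.val
    rw [inv_pow] at this
    exact this
  have hgY : ∀ i, g i * Y = Y * (g i)⁻¹ := by
    intro i
    rw [eq_mul_inv_iff_mul_eq, mul_assoc, hYg, mul_inv_cancel_left]
  refine ⟨MonoidHom.mk' (fun x => match x with
    | .a i => g i
    | .xa i => Y * g i) ?_, ?_, ?_⟩
  · rintro (i | i) (j | j)
    · rw [QuaternionGroup.a_mul_a]; exact hadd i j
    · rw [QuaternionGroup.a_mul_xa]
      change Y * g (j - i) = g i * (Y * g j)
      rw [hsub, ← mul_assoc, ← mul_assoc, hgY]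
    · rw [QuaternionGroup.xa_mul_a]
      change Y * g (i + j) = Y * g i * g j
      rw [hadd, mul_assoc]
    · rw [QuaternionGroup.xa_mul_xa]
      change g (p + j - i) = Y * g i * (Y * g j)
      rw [hsub, hadd, hgn, ← hYY, hYg i]
      simp only [mul_assoc]
  · change A ^ (1 : ZMod (2 * p)).val = A
    have := hgn 1
    simpa [g] using this
  · change Y * A ^ (0 : ZMod (2 * p)).val = Y
    simp

lemma rep2 {K : Type*} [Field K] [CharZero K] {p : ℕ} (hp : Odd p) (c a b : K)
    (hdvd : (X ^ 2 - C c * X + 1 : K[X]) ∣ X ^ p - 1) (hab : a ^ 2 + b ^ 2 = c ^ 2 - 4) :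
    ∃ f : QuaternionGroup p →* GL (Fin 2) K,
      (f (.xa 0) : Matrix (Fin 2) (Fin 2) K) * f (.xa 0) = -1 ∧
      (f (.xa 0) : Matrix (Fin 2) (Fin 2) K) *
          ((f (.a 1))⁻¹.1 - (f (.a 1)).1) = - (((f (.a 1))⁻¹.1 - (f (.a 1)).1) * f (.xa 0)) ∧
      ((f (.a 1))⁻¹.1 - (f (.a 1)).1) * ((f (.a 1))⁻¹.1 - (f (.a 1)).1) =
        (c ^ 2 - 4) • (1 : Matrix (Fin 2) (Fin 2) K) := by
  have : NeZero p := ⟨by rintro rfl; simp at hp⟩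
  let W : Matrix (Fin 2) (Fin 2) K := !![a, b; b, -a]
  let Z : Matrix (Fin 2) (Fin 2) K := !![0, -1; 1, 0]
  have hWW : W * W = (c ^ 2 - 4) • 1 := by
    rw [← hab]
    ext i j
    fin_cases i <;> fin_cases j <;> simp [W] <;> ring
  have hZZ : Z * Z = -1 := by
    ext i j
    fin_cases i <;> fin_cases j <;> simp [Z]
  have hZW : Z * W = -(W * Z) := by
    ext i j
    fin_cases i <;> fin_cases j <;> simp [Z, W]
  let A : Matrix (Fin 2) (Fin 2) K := (-(1/2) : K) • (c • 1 + W)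
  let B : Matrix (Fin 2) (Fin 2) K := (-(1/2) : K) • (c • 1 - W)
  have hAB : A * B = 1 := by
    simp only [A, B, add_mul, mul_sub, hWW, mul_one, one_mul, smul_mul_assoc,
      mul_smul_comm]
    module
  have hBA : B * A = 1 := by
    simp only [A, B, sub_mul, mul_add, hWW, mul_one, one_mul, smul_mul_assoc,
      mul_smul_comm]
    module
  have hsum : A + B = (-c) • 1 := by simp only [A, B]; module
  have hdiff : B - A = W := by simp only [A, B]; module
  have hZA : Z * A = B * Z := by
    simp only [A, B, mul_smul_comm, smul_mul_assoc, mul_add, sub_mul, hZW, mul_one, one_mul]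
    module
  clear_value A B
  have hNp : (-A) ^ p = 1 := by
    obtain ⟨q, hq⟩ := hdvd
    have h := congrArg (aeval (-A)) hq
    simp only [map_sub, map_mul, map_add, map_one, map_pow, aeval_X, aeval_C,
      Algebra.algebraMap_eq_smul_one] at h
    have h0 : (-A) ^ 2 - c • (1 : Matrix (Fin 2) (Fin 2) K) * (-A) + 1 = 0 := by
      have hB : B = (-c) • 1 - A := by rw [← hsum]; abel
      rw [hB, mul_sub, mul_smul_comm, mul_one] at hAB
      rw [neg_sq, sq, smul_mul_assoc, one_mul, ← hAB]
      module
    rw [h0, zero_mul, sub_eq_zero] at h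
    exact h
  have hAp : A ^ p = -1 := by
    rw [hp.neg_pow] at hNp
    rw [← hNp, neg_neg]
  let uA : GL (Fin 2) K := ⟨A, B, hAB, hBA⟩
  let uZ : GL (Fin 2) K := ⟨Z, -Z, by rw [mul_neg, hZZ, neg_neg], by rw [neg_mul, hZZ, neg_neg]⟩
  obtain ⟨f, hfA, hfZ⟩ := quat_lift (p := p) uA uZ
    (by
      apply Units.ext
      change A ^ (2 * p) = 1
      rw [mul_comm, pow_mul, hAp]; simp)
    (by
      apply Units.ext
      change Z * Z = A ^ p
      rw [hAp, hZZ])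
    (by
      apply Units.ext
      exact hZA)
  refine ⟨f, ?_, ?_, ?_⟩
  · rw [hfZ]; exact hZZ
  · rw [hfZ, hfA]
    change Z * (B - A) = -((B - A) * Z)
    rw [hdiff, hZW]
  · rw [hfA]
    change (B - A) * (B - A) = _
    rw [hdiff, hWW]

end EdRep

namespace EdRep
open Polynomial IntermediateField

lemma descends_top {k K : Type*} [Field k] [Field K] [Algebra k K] {G : Type*} [Group G] {n : ℕ}
    (ρ : G →* GL (Fin n) K) : Descends ρ (⊤ : IntermediateField k K) := by
  let e : K →+* (⊤ : IntermediateField k K) := (IntermediateField.topEquiv (F := k) (E := K)).symm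
  refine ⟨(Units.map (e.mapMatrix).toMonoidHom).comp ρ, 1, fun g => ?_⟩
  rw [one_mul, inv_one, mul_one]
  apply Units.ext
  ext i j
  rfl

lemma trdegEq_of {k K : Type} [Field k] [Field K] [Algebra k K]
    (K₀ : IntermediateField k K) (l : ℕ) (h : Algebra.trdeg k K₀ = l) : TrdegEq K₀ l := by
  constructor
  · intro s hs
    have := hs.cardinalMk_le_trdeg
    rw [h] at this
    simpa using this
  · obtain ⟨s, hs⟩ := exists_isTranscendenceBasis k K₀
    have hc := hs.cardinalMk_eq_trdeg
    rw [h] at hc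
    have hfin : s.Finite := by
      have : Cardinal.mk s < Cardinal.aleph0 := by rw [hc]; exact Cardinal.natCast_lt_aleph0
      exact Cardinal.lt_aleph0_iff_set_finite.1 this
    refine ⟨hfin.toFinset, ?_, ?_⟩
    · have := hs.1.comp (fun x : {y : K₀ // y ∈ hfin.toFinset} => (⟨x.1, hfin.mem_toFinset.1 x.2⟩ : s))
        (fun x y hxy => Subtype.ext (congrArg (fun z : s => (z : K₀)) hxy))
      exact this
    · have : ((hfin.toFinset.card : ℕ) : Cardinal) = l := by
        rw [← hc, ← Cardinal.mk_coe_finset]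
        exact Cardinal.mk_congr (Equiv.setCongr (by simp))
      exact_mod_cast this

theorem exists_rho {k K : Type} [Field k] [CharZero k] [Field K] [Algebra k K] {l : ℕ}
    (p : Fin l → ℕ) (c : Fin l → k) (hp : ∀ j, Odd (p j))
    (hdvd : ∀ j, (X ^ 2 - C (c j) * X + 1 : k[X]) ∣ X ^ (p j) - 1)
    (hab : ∀ j, ∃ a b : K, a ^ 2 + b ^ 2 = algebraMap k K (c j ^ 2 - 4)) :
    ∃ (n : ℕ) (ρ : (∀ j, QuaternionGroup (p j)) →* GL (Fin n) K),
      ∀ K₀ : IntermediateField k K, Descends ρ K₀ →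
        ∀ j, ∃ a b : K₀, a ^ 2 + b ^ 2 = algebraMap k K₀ (c j ^ 2 - 4) := by
  have hcz : CharZero K := charZero_of_injective_algebraMap (algebraMap k K).injective
  choose a b hab using hab
  have hr : ∀ j, _ := fun j => rep2 (hp j) (algebraMap k K (c j)) (a j) (b j)
    (by simpa using Polynomial.map_dvd (algebraMap k K) (hdvd j))
    (by rw [hab, map_sub, map_pow, map_ofNat])
  choose f hf1 hf2 hf3 using hr
  let e : Fin 2 × Fin l ≃ Fin (2 * l) := finProdFinEquiv
  let Ψ : (Fin l → Matrix (Fin 2) (Fin 2) K) →+* Matrix (Fin (2 * l)) (Fin (2 * l)) K :=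
    (Matrix.reindexAlgEquiv K K e).toRingEquiv.toRingHom.comp
      (Matrix.blockDiagonalRingHom (Fin 2) (Fin l) K)
  have hΨs : ∀ (r : K) x, Ψ (r • x) = r • Ψ x := by
    intro r x
    change Matrix.reindexAlgEquiv K K e (Matrix.blockDiagonal (r • x)) = _
    rw [Matrix.blockDiagonal_smul, map_smul]
    rfl
  have hΨt : ∀ x, Matrix.trace (Ψ x) = ∑ j, Matrix.trace (x j) := by
    intro x
    rw [← Matrix.trace_blockDiagonal]
    change ∑ i, (Matrix.blockDiagonal x) (e.symm i) (e.symm i) = ∑ i, _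
    exact e.symm.sum_comp (fun i => Matrix.blockDiagonal x i i)
  let F : (∀ j, QuaternionGroup (p j)) →* (Fin l → Matrix (Fin 2) (Fin 2) K) :=
    MonoidHom.pi fun j => (Units.coeHom _).comp ((f j).comp (Pi.evalMonoidHom _ j))
  let ρ : (∀ j, QuaternionGroup (p j)) →* GL (Fin (2 * l)) K := (Ψ.toMonoidHom.comp F).toHomUnits
  have hρ : ∀ g, (ρ g : Matrix _ _ K) = Ψ (F g) := fun g => rfl
  refine ⟨2 * l, ρ, ?_⟩
  rintro K₀ ⟨ρ', M, hM⟩ j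
  have hcz0 : CharZero K₀ := charZero_of_injective_algebraMap (algebraMap k K₀).injective
  let Φ : Matrix (Fin (2 * l)) (Fin (2 * l)) K₀ →+* Matrix (Fin (2 * l)) (Fin (2 * l)) K :=
    { toFun := fun x => M.1 * (algebraMap K₀ K).mapMatrix x * M⁻¹.1
      map_one' := by rw [map_one, mul_one, ← Units.val_mul, mul_inv_cancel, Units.val_one]
      map_zero' := by rw [map_zero, mul_zero, zero_mul]
      map_add' := fun x y => by rw [map_add, mul_add, add_mul]
      map_mul' := fun x y => by
        rw [map_mul]
        simp only [mul_assoc]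
        rw [Units.inv_mul_cancel_left] }
  have hΦ : ∀ g, Φ (ρ' g) = Ψ (F g) := by
    intro g
    rw [← hρ, hM]
    rfl
  have hΦt : ∀ x, Matrix.trace (Φ x) = algebraMap K₀ K (Matrix.trace x) := by
    intro x
    change Matrix.trace (M.1 * (algebraMap K₀ K).mapMatrix x * M⁻¹.1) = _
    rw [Matrix.trace_mul_comm, Units.inv_mul_cancel_left]
    simp [Matrix.trace]
  have hΦs : ∀ (r : K₀) x, Φ (r • x) = algebraMap K₀ K r • Φ x := by
    intro r x
    change M.1 * (algebraMap K₀ K).mapMatrix (r • x) * M⁻¹.1 = _ • (M.1 * _ * M⁻¹.1)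
    have : (algebraMap K₀ K).mapMatrix (r • x) = algebraMap K₀ K r • (algebraMap K₀ K).mapMatrix x := by
      ext i j; simp
    rw [this, mul_smul_comm, smul_mul_assoc]
  have hΦi : Function.Injective Φ := by
    intro x y hxy
    have hxy : M.1 * (algebraMap K₀ K).mapMatrix x * M⁻¹.1 =
      M.1 * (algebraMap K₀ K).mapMatrix y * M⁻¹.1 := hxy
    rw [Units.mul_left_inj, Units.mul_right_inj] at hxy
    exact Matrix.map_injective (algebraMap K₀ K).injective hxy
  let gx : ∀ j, QuaternionGroup (p j) := Pi.mulSingle j (.xa 0)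
  let ga : ∀ j, QuaternionGroup (p j) := Pi.mulSingle j (.a 1)
  have hFx : ∀ i, (i = j ∧ F gx i = f i (.xa 0)) ∨ (i ≠ j ∧ F gx i = 1) := by
    intro i
    by_cases h : i = j
    · subst h; left; exact ⟨rfl, by simp [F, gx]⟩
    · right; exact ⟨h, by simp [F, gx, Pi.mulSingle_eq_of_ne h]⟩
  have hFw : ∀ i, (i = j ∧ (F ga⁻¹ - F ga) i = (f i (.a 1))⁻¹.1 - (f i (.a 1)).1) ∨
      (i ≠ j ∧ (F ga⁻¹ - F ga) i = 0) := by
    intro i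
    by_cases h : i = j
    · subst h; left; exact ⟨rfl, by simp [F, ga]⟩
    · right; exact ⟨h, by simp [F, ga, Pi.mulSingle_eq_of_ne h]⟩
  set y := F gx with hy
  set w := F ga⁻¹ - F ga with hw
  have hΦy : Φ (ρ' gx) = Ψ y := hΦ _
  have hΦw : Φ ((ρ' ga⁻¹).1 - (ρ' ga).1) = Ψ w := by
    rw [map_sub, hΦ, hΦ, hw, map_sub]
  have e1 : y * y * (y * y) = 1 := by
    funext i
    rcases hFx i with ⟨h, hi⟩ | ⟨h, hi⟩ <;> simp [hi, hf1]
  have e2 : y * w = -(w * y) := by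
    funext i
    rcases hFw i with ⟨h, hi⟩ | ⟨h, hi⟩
    · rcases hFx i with ⟨h', hi'⟩ | ⟨h', hi'⟩
      · simp only [Pi.mul_apply, Pi.neg_apply, hi, hi', hf2]
      · exact absurd h h'
    · simp [hi]
  have e3 : y * y * w = -w := by
    funext i
    rcases hFw i with ⟨h, hi⟩ | ⟨h, hi⟩
    · rcases hFx i with ⟨h', hi'⟩ | ⟨h', hi'⟩
      · simp only [Pi.mul_apply, Pi.neg_apply, hi', hf1, neg_mul, one_mul]
      · exact absurd h h'
    · simp [hi]
  have e4 : (2 : K) • (w * w) = (algebraMap k K (c j ^ 2 - 4)) • (1 - y * y) := by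
    funext i
    rcases hFx i with ⟨h, hi⟩ | ⟨h, hi⟩
    · rcases hFw i with ⟨h', hi'⟩ | ⟨h', hi'⟩
      · subst h
        simp only [Pi.mul_apply, Pi.smul_apply, Pi.sub_apply, Pi.one_apply, hi, hi', hf1, hf3]
        simp only [map_sub, map_pow, map_ofNat]
        module
      · exact absurd h h'
    · rcases hFw i with ⟨h', hi'⟩ | ⟨h', hi'⟩
      · exact absurd h' h
      · simp [hi, hi']
  have e5 : Matrix.trace (Ψ (1 - y * y)) = 4 := by
    rw [hΨt, Finset.sum_eq_single j]
    · rcases hFx j with ⟨h, hi⟩ | ⟨h, hi⟩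
      · simp only [Pi.mul_apply, Pi.sub_apply, Pi.one_apply, hi, hf1, sub_neg_eq_add,
          Matrix.trace_add, Matrix.trace_one]
        norm_num
      · exact absurd rfl h
    · intro i _ hij
      rcases hFx i with ⟨h, hi⟩ | ⟨h, hi⟩
      · exact absurd h hij
      · simp [hi]
    · simp
  refine extract_mat (ρ' gx).1 ((ρ' ga⁻¹).1 - (ρ' ga).1) _ ?_ ?_ ?_ ?_ ?_
  · apply hΦi
    simp only [map_mul Φ, map_one Φ, hΦy]
    rw [← map_mul Ψ, ← map_mul Ψ, e1, map_one]
  · apply hΦi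
    rw [map_neg Φ, map_mul Φ, map_mul Φ, hΦw, hΦy, ← map_mul Ψ, e2, map_neg, map_mul]
  · apply hΦi
    rw [map_neg Φ, map_mul Φ, map_mul Φ, hΦw, hΦy, ← map_mul Ψ, ← map_mul Ψ, e3, map_neg]
  · apply hΦi
    rw [hΦs, hΦs, map_sub Φ, map_mul Φ, map_mul Φ, map_one Φ, hΦw, hΦy, ← map_mul Ψ, ← map_mul Ψ,
      map_ofNat, ← hΨs, e4, hΨs, map_sub Ψ, map_one Ψ]
    rfl
  · apply (algebraMap K₀ K).injective
    rw [← hΦt, map_sub Φ, map_mul Φ, map_one Φ, hΦy, ← map_mul Ψ, ← map_one Ψ, ← map_sub Ψ, e5,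
      map_ofNat]

end EdRep

/-- A variant of a theorem of Brauer: for every integer `l ≥ 1` there exist a number
field `k`, a finite group `G`, a field extension `K/k` and a representation
`ρ : G → GL_n(K)` whose essential dimension equals `l`. -/
theorem exists_rep_with_ed_eq (l : ℕ) (hl : 1 ≤ l) : Nonempty (EdRepWitness l) := by
  obtain ⟨k, _, _, p, c, hp, hdvd, hd0, hind⟩ := EdRep.numberTheory l
  have hns : ∀ x : k, x ^ 2 ≠ -1 := by
    intro x hx
    let j : Fin l := ⟨0, hl⟩
    have h := hind ((c j ^ 2 - 4 + 1) / 2) (x * (c j ^ 2 - 4 - 1) / 2) (Pi.single j 1) (by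
      rw [Finset.prod_eq_single j]
      · rw [Pi.single_eq_same, pow_one, div_pow, div_pow, mul_pow, hx]
        ring
      · intro i _ hi
        rw [Pi.single_eq_of_ne hi, pow_zero]
      · simp) j
    rw [Pi.single_eq_same] at h
    simp at h
  obtain ⟨K, _, _, hab, htr⟩ := EdRep.exists_K hns (fun j => c j ^ 2 - 4) hd0 hind
  obtain ⟨n, ρ, hρ⟩ := EdRep.exists_rho p c hp hdvd hab
  have hfin : ∀ j, Finite (QuaternionGroup (p j)) := by
    intro j
    have : NeZero (p j) := ⟨fun h => by have := hp j; rw [h] at this; simp at this⟩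
    infer_instance
  exact ⟨{
    k := k
    K := K
    G := ∀ j, QuaternionGroup (p j)
    n := n
    ρ := ρ
    descends_to_l := ⟨⊤, EdRep.descends_top ρ,
      EdRep.trdegEq_of _ _ (htr _ (hρ _ (EdRep.descends_top ρ)))⟩
    not_below_l := fun K₀ hlt hdes => by
      obtain ⟨s, hs, hc⟩ := (EdRep.trdegEq_of _ _ (htr _ (hρ _ hdes))).2
      exact absurd (hlt s hs) (by omega) }⟩
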